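/- For every integer k ≥ 2 and every k-decomposable permutation point set X of size n, the set MMC of pairs arising from the execution of GREEDY satisfies |MMC| ≤ 14 · n · log₂ k. -/

import Mathlib

open Finset

attribute [local instance] Classical.propDecidable

/-- A point in the plane: first coordinate is the key, second is the time. -/
abbrev Pt : Type := ℤ × ℤ

/-- `r` lies in the closed axis-parallel rectangle with opposite corners `p` and `q`. -/
def inRect (p q r : Pt) : Prop :=
  min p.1 q.1 ≤ r.1 ∧ r.1 ≤ max p.1 q.1 ∧ min p.2 q.2 ≤ r.2 ∧ r.2 ≤ max p.2 q.2

/-- `r` lies in the open axis-parallel rectangle with opposite corners `p` and `q`. -/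
def inOpenRect (p q r : Pt) : Prop :=
  min p.1 q.1 < r.1 ∧ r.1 < max p.1 q.1 ∧ min p.2 q.2 < r.2 ∧ r.2 < max p.2 q.2

/-- `S` is an arborally satisfied set. -/
def ArbSat (S : Finset Pt) : Prop :=
  ∀ p ∈ S, ∀ q ∈ S, p.1 = q.1 ∨ p.2 = q.2 ∨ ∃ r ∈ S, r ≠ p ∧ r ≠ q ∧ inRect p q r

/-- `X` is the permutation point set `{(σ(t), t) : 1 ≤ t ≤ n}` of some permutation `σ` of
`{1, …, n}`. -/
def IsPermPointSet (n : ℕ) (X : Finset Pt) : Prop :=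
  ∃ σ : Equiv.Perm (Fin n),
    X = Finset.univ.image (fun t : Fin n => ((((σ t : ℕ) : ℤ) + 1, ((t : ℕ) : ℤ) + 1) : Pt))

/-- The points added by GREEDY at time `t`, given the point set `X` and the set `G` of points
added before time `t`: for the point `p` of `X` with time `t` and each point `q` of time `< t`
with a different key such that the rectangle spanned by `p` and `q` contains no other point of
time `< t`, the point `(key q, t)` is added. -/
noncomputable def greedyStep (X G : Finset Pt) (t : ℤ) : Finset Pt :=
  (X.filter (fun p => p.2 = t)).biUnion (fun p =>
    (((X ∪ G).filter (fun s => s.2 < t)).filter (fun q =>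
      q.1 ≠ p.1 ∧ ∀ r ∈ (X ∪ G).filter (fun s => s.2 < t), inRect p q r → r = q)).image
      (fun q => ((q.1, t) : Pt)))

/-- All points added by GREEDY while processing times `1, …, t`. -/
noncomputable def greedyUpTo (X : Finset Pt) : ℕ → Finset Pt
  | 0 => ∅
  | t + 1 => greedyUpTo X t ∪ greedyStep X (greedyUpTo X t) ((t : ℤ) + 1)

/-- The set `G` of points added by GREEDY over the whole execution on a permutation point set
`X` of size `n`. -/
noncomputable def greedyG (n : ℕ) (X : Finset Pt) : Finset Pt := greedyUpTo X n

/-- `OP r` is the point of `X` processed at the time at which `r` was added; for `r ∈ X`,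
`OP r = r`. -/
noncomputable def OP (X : Finset Pt) (r : Pt) : Pt :=
  ((X.filter (fun p => p.2 = r.2)).toList).headI

/-- The first point of `S` above `p`: the point of `S` with the same key as `p`, smaller time,
and the largest such time. -/
noncomputable def firstAbove (S : Finset Pt) (p : Pt) : Pt :=
  (p.1, (((S.filter (fun q => q.1 = p.1 ∧ q.2 < p.2)).image Prod.snd).max).unbotD 0)

/-- The pair `CP(p) = (OP(p), OP(q))` where `q` is the first point of `X ∪ G` above `p`. -/
noncomputable def CP (X G : Finset Pt) (p : Pt) : Pt × Pt :=
  (OP X p, OP X (firstAbove (X ∪ G) p))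

/-- `CP(p) ∈ MMC` (*zig*). -/
def inMMC (X G : Finset Pt) (p : Pt) : Prop :=
  ((CP X G p).1.1 < p.1 ∧ (CP X G p).2.1 < (CP X G p).1.1 ∧ (CP X G p).2.2 < (CP X G p).1.2)
  ∨ (p.1 < (CP X G p).1.1 ∧ (CP X G p).1.1 < (CP X G p).2.1 ∧ (CP X G p).2.2 < (CP X G p).1.2)

/-- `CP(p) ∈ MFC` (*zag*). -/
def inMFC (X G : Finset Pt) (p : Pt) : Prop :=
  ((CP X G p).1.1 < p.1 ∧ p.1 ≤ (CP X G p).2.1 ∧ (CP X G p).2.2 < p.2)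
  ∨ (p.1 < (CP X G p).1.1 ∧ (CP X G p).2.1 ≤ p.1 ∧ (CP X G p).2.2 < p.2)

/-- A pair is good if no point of `X` lies in the open rectangle spanned by it. -/
def IsGoodPair (X : Finset Pt) (pr : Pt × Pt) : Prop :=
  ∀ r ∈ X, ¬ inOpenRect pr.1 pr.2 r

/-- `B` is a block of `X`: the set of points of `X` whose times lie in some interval, whose
keys form a set of consecutive integers; blocks are nonempty. -/
def IsBlock (X B : Finset Pt) : Prop :=
  B.Nonempty ∧ (∃ i j : ℤ, B = X.filter (fun p => i ≤ p.2 ∧ p.2 ≤ j)) ∧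
    ∃ c d : ℤ, B.image Prod.fst = Finset.Icc c d

/-- `Top(B)`: the point of `B` with the smallest time. -/
noncomputable def TopPt (B : Finset Pt) : Pt :=
  ((B.filter (fun p => ∀ q ∈ B, p.2 ≤ q.2)).toList).headI

/-- A decomposition tree of `X`: a rooted tree whose nodes are blocks of `X`, whose root is
`X`, whose leaves are exactly the singleton blocks, and in which the children of every
internal node partition it. -/
structure DecompTree (X : Finset Pt) where
  nodes : Finset (Finset Pt)
  parent : Finset Pt → Finset Pt
  isBlock_nodes : ∀ B ∈ nodes, IsBlock X B
  root_mem : X ∈ nodes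
  parent_mem : ∀ B ∈ nodes, B ≠ X → parent B ∈ nodes
  ssubset_parent : ∀ B ∈ nodes, B ≠ X → B ⊂ parent B
  leaf_iff : ∀ B ∈ nodes, (¬ ∃ C ∈ nodes, C ≠ X ∧ parent C = B) ↔ B.card = 1
  children_partition : ∀ B ∈ nodes, B.card ≠ 1 →
    ∀ x ∈ B, ∃! C, C ∈ nodes ∧ C ≠ X ∧ parent C = B ∧ x ∈ C

/-- The children of a node `B` in a decomposition tree. -/
noncomputable def DecompTree.children {X : Finset Pt} (T : DecompTree X) (B : Finset Pt) :
    Finset (Finset Pt) :=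
  T.nodes.filter (fun C => C ≠ X ∧ T.parent C = B)

/-- `X` is `k`-decomposable: it admits a decomposition tree in which every node has at most
`k` children. -/
def kDecomposable (k : ℕ) (X : Finset Pt) : Prop :=
  ∃ T : DecompTree X, ∀ B ∈ T.nodes, (T.children B).card ≤ k

/-- `RT(p)`: the node of the decomposition tree closest to the root (i.e. containing all
others) among the nodes `B` with `Top(B) = p`. -/
noncomputable def RT {X : Finset Pt} (T : DecompTree X) (p : Pt) : Finset Pt :=
  (((T.nodes.filter (fun B => TopPt B = p)).filter
      (fun B => ∀ C ∈ T.nodes, TopPt C = p → C ⊆ B)).toList).headI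

/-- The points added by GREEDY (`G`) while processing `Top(B)` that lie to the left of
`Top(B)`. -/
noncomputable def leftSet (G B : Finset Pt) : Finset Pt :=
  G.filter (fun s => s.2 = (TopPt B).2 ∧ s.1 < (TopPt B).1)

/-- `Left(B)`: among the points added by GREEDY while processing `Top(B)` with key less than
`key (Top B)`, the one with the largest key (junk if none exists). -/
noncomputable def leftPt (G B : Finset Pt) : Pt :=
  (((leftSet G B).filter (fun s => ∀ r ∈ leftSet G B, r.1 ≤ s.1)).toList).headI

/-- The points added by GREEDY (`G`) while processing `Top(B)` that lie to the right of
`Top(B)`. -/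
noncomputable def rightSet (G B : Finset Pt) : Finset Pt :=
  G.filter (fun s => s.2 = (TopPt B).2 ∧ (TopPt B).1 < s.1)

/-- `Right(B)`: among the points added by GREEDY while processing `Top(B)` with key greater
than `key (Top B)`, the one with the smallest key (junk if none exists). -/
noncomputable def rightPt (G B : Finset Pt) : Pt :=
  (((rightSet G B).filter (fun s => ∀ r ∈ rightSet G B, s.1 ≤ r.1)).toList).headI

lemma log_sub_add_log_le {u w : ℕ} (hu : 0 < u) (huw : u < w) :
    Nat.log 2 (w - u) + 1 + Nat.log 2 u ≤ 2 * Nat.log 2 w := by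
  rcases le_total (u * 2) w with h | h
  · have h1 := Nat.log_mono_right (b := 2) h
    have h2 := Nat.log_mono_right (b := 2) (Nat.sub_le w u)
    rw [Nat.log_mul_base (by norm_num) hu.ne'] at h1
    omega
  · have h1 := Nat.log_mono_right (b := 2) (show (w - u) * 2 ≤ w by omega)
    have h2 := Nat.log_mono_right (b := 2) huw.le
    rw [Nat.log_mul_base (by norm_num) (by omega)] at h1
    omega

/-- Telescoping bound along an increasing list of distances: `B` bounds the old potentials from
below, `A` the new ones from above. -/
lemma list_potential_bound (A B : ℕ → ℕ) (L : ℕ) (rest : List ℕ) :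
    ∀ u v : ℕ, (u :: v :: rest).Pairwise (· < ·) → 0 < u →
      (∀ x ∈ u :: v :: rest, ∀ y ∈ u :: v :: rest, ∀ z ∈ u :: v :: rest, x < y → y < z →
        A y ≤ Nat.log 2 (z - x)) →
      (∀ x ∈ u :: v :: rest, Nat.log 2 x ≤ B x) →
      (∀ x ∈ u :: v :: rest, A x ≤ L) →
      (∀ x ∈ u :: v :: rest, Nat.log 2 x ≤ L) →
      A v + (rest.map A).sum + rest.length + Nat.log 2 u + Nat.log 2 v
        ≤ (rest.map B).sum + 3 * L := by
  induction rest with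
  | nil =>
    intro u v _ _ _ _ hA hL
    have h1 := hA v (by simp)
    have h2 := hL u (by simp)
    have h3 := hL v (by simp)
    simp
    omega
  | cons w rest ih =>
    intro u v hp hu hN hB hA hL
    have huv : u < v := (List.pairwise_cons.1 hp).1 v (by simp)
    have hp' := (List.pairwise_cons.1 hp).2
    have hvw : v < w := (List.pairwise_cons.1 hp').1 w (by simp)
    have key := ih v w hp' (by omega)
      (fun x hx y hy z hz => hN x (List.mem_cons_of_mem _ hx) y (List.mem_cons_of_mem _ hy) z
        (List.mem_cons_of_mem _ hz))
      (fun x hx => hB x (List.mem_cons_of_mem _ hx))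
      (fun x hx => hA x (List.mem_cons_of_mem _ hx))
      (fun x hx => hL x (List.mem_cons_of_mem _ hx))
    have h1 := hN u (by simp) v (by simp) w (by simp) huv hvw
    have h2 := hB w (by simp)
    have h3 := log_sub_add_log_le hu (huv.trans hvw)
    simp only [List.map_cons, List.sum_cons, List.length_cons]
    omega

lemma nat_potential_bound (T : Finset ℕ) (A B : ℕ → ℕ) (L : ℕ) (hpos : ∀ x ∈ T, 0 < x)
    (hN : ∀ x ∈ T, ∀ y ∈ T, ∀ z ∈ T, x < y → y < z → A y ≤ Nat.log 2 (z - x))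
    (hB : ∀ x ∈ T, Nat.log 2 x ≤ B x) (hA : ∀ x ∈ T, A x ≤ L)
    (hL : ∀ x ∈ T, Nat.log 2 x ≤ L) :
    ∑ x ∈ T, A x + T.card ≤ ∑ x ∈ T, B x + (4 * L + 2) := by
  have hsort : (T.sort (· ≤ ·)).Pairwise (· < ·) := (Finset.sortedLT_sort T).pairwise
  have hmem : ∀ x, x ∈ T.sort (· ≤ ·) ↔ x ∈ T := fun x => Finset.mem_sort (· ≤ ·)
  have hlen : (T.sort (· ≤ ·)).length = T.card := Finset.length_sort (· ≤ ·)
  have hsum : ∀ f : ℕ → ℕ, ((T.sort (· ≤ ·)).map f).sum = ∑ x ∈ T, f x := by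
    intro f
    rw [← List.sum_toFinset f (Finset.sort_nodup T (· ≤ ·)), Finset.sort_toFinset]
  rw [← hsum A, ← hsum B, ← hlen]
  simp only [← hmem] at hpos hN hB hA hL
  generalize T.sort (· ≤ ·) = l at *
  match l with
  | [] => simp
  | [u] =>
    have := hA u (by simp)
    simp
    omega
  | u :: v :: rest =>
    have h1 := list_potential_bound A B L rest u v hsort (hpos u (by simp)) hN hB hA hL
    have h2 := hA u (by simp)
    simp only [List.map_cons, List.sum_cons, List.length_cons]
    omega

lemma potential_bound {ι : Type*} (T : Finset ι) (d : ι → ℕ) (hd : Set.InjOn d T)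
    (A B : ι → ℕ) (L : ℕ) (hpos : ∀ x ∈ T, 0 < d x)
    (hN : ∀ x ∈ T, ∀ y ∈ T, ∀ z ∈ T, d x < d y → d y < d z → A y ≤ Nat.log 2 (d z - d x))
    (hB : ∀ x ∈ T, Nat.log 2 (d x) ≤ B x) (hA : ∀ x ∈ T, A x ≤ L)
    (hL : ∀ x ∈ T, Nat.log 2 (d x) ≤ L) :
    ∑ x ∈ T, A x + T.card ≤ ∑ x ∈ T, B x + (4 * L + 2) := by
  rcases T.eq_empty_or_nonempty with rfl | ⟨x0, hx0⟩
  · simp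
  have : Nonempty ι := ⟨x0⟩
  have hinv : ∀ x ∈ T, Function.invFunOn d T (d x) = x :=
    fun x hx => hd.leftInvOn_invFunOn hx
  have key := nat_potential_bound (T.image d) (fun y => A (Function.invFunOn d T y))
    (fun y => B (Function.invFunOn d T y)) L (by simpa using hpos)
    (by
      simp only [Finset.mem_image, forall_exists_index, and_imp, forall_apply_eq_imp_iff₂]
      intro x hx y hy z hz
      rw [hinv y hy]
      exact hN x hx y hy z hz)
    (by
      simp only [Finset.mem_image, forall_exists_index, and_imp, forall_apply_eq_imp_iff₂]
      intro x hx
      rw [hinv x hx]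
      exact hB x hx)
    (by
      simp only [Finset.mem_image, forall_exists_index, and_imp, forall_apply_eq_imp_iff₂]
      intro x hx
      rw [hinv x hx]
      exact hA x hx)
    (by simpa using hL)
  have hsumA : ∑ x ∈ T, A (Function.invFunOn d T (d x)) = ∑ x ∈ T, A x :=
    Finset.sum_congr rfl fun x hx => by rw [hinv x hx]
  have hsumB : ∑ x ∈ T, B (Function.invFunOn d T (d x)) = ∑ x ∈ T, B x :=
    Finset.sum_congr rfl fun x hx => by rw [hinv x hx]
  rw [Finset.sum_image hd, Finset.sum_image hd, Finset.card_image_of_injOn hd, hsumA,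
    hsumB] at key
  exact key

/-- The elements of `K` reachable from `E` without crossing another element of `I` whose
timestamp is at least that of `E`. -/
noncomputable def nbhd (K I : Finset ℤ) (τ : ℤ → ℤ) (E : ℤ) : Finset ℤ :=
  K.filter (fun x => ∀ F ∈ I, (E < F ∧ F ≤ x) ∨ (x ≤ F ∧ F < E) → τ F < τ E)

/-- The integer-valued rank of `E`. -/
noncomputable def nbhdRank (K I : Finset ℤ) (τ : ℤ → ℤ) (E : ℤ) : ℕ :=
  Nat.log 2 ((nbhd K I τ E).card + 1)

/-- `y` lies strictly between `x` and `z`. -/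
def KeyBtw (x y z : ℤ) : Prop := (x < y ∧ y < z) ∨ (z < y ∧ y < x)

lemma nbhdRank_le (K I : Finset ℤ) (τ : ℤ → ℤ) (E : ℤ) :
    nbhdRank K I τ E ≤ Nat.log 2 (K.card + 1) :=
  Nat.log_mono_right (Nat.succ_le_succ (Finset.card_le_card (Finset.filter_subset _ _)))

/-- Potential change on the touched elements on one side of the accessed element. -/
lemma side_potential_bound (K I T : Finset ℤ) (a t : ℤ) (τ τ' : ℤ → ℤ) (hIK : I ⊆ K)
    (hT : T ⊆ I) (hside : (∀ E ∈ T, a < E) ∨ (∀ E ∈ T, E < a))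
    (h1 : ∀ E ∈ T, ∀ F ∈ I, KeyBtw a F E → τ F < τ E) (h2 : ∀ E ∈ T, t ≤ τ' E)
    (h3 : ∀ E ∈ T, ∀ F ∈ I, KeyBtw a F E → τ' E = t) :
    ∑ E ∈ T, nbhdRank K (insert a I) τ' E + T.card
      ≤ ∑ E ∈ T, nbhdRank K I τ E + (4 * Nat.log 2 (K.card + 1) + 2) := by
  set f : ℤ → Finset ℤ := fun E => K.filter (fun x => (a < x ∧ x ≤ E) ∨ (E ≤ x ∧ x < a))
    with hf
  have hmem : ∀ E ∈ T, E ∈ f E := by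
    intro E hE
    have : E ∈ K := hIK (hT hE)
    simp only [hf, Finset.mem_filter]
    refine ⟨this, ?_⟩
    rcases hside with h | h
    · have := h E hE; omega
    · have := h E hE; omega
  have hsub : ∀ E ∈ T, ∀ E' ∈ T, KeyBtw a E E' → f E ⊆ (f E').erase E' := by
    intro E hE E' hE' hb x hx
    simp only [hf, Finset.mem_filter, Finset.mem_erase, KeyBtw] at hx hb ⊢
    refine ⟨?_, hx.1, ?_⟩ <;> omega
  have hmono : ∀ E ∈ T, ∀ E' ∈ T, KeyBtw a E E' → (f E).card < (f E').card := by
    intro E hE E' hE' hb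
    have h := Finset.card_le_card (hsub E hE E' hE' hb)
    rw [Finset.card_erase_of_mem (hmem E' hE')] at h
    have := Finset.card_pos.2 ⟨E', hmem E' hE'⟩
    omega
  have htri : ∀ E ∈ T, ∀ E' ∈ T, E = E' ∨ KeyBtw a E E' ∨ KeyBtw a E' E := by
    intro E hE E' hE'
    simp only [KeyBtw]
    rcases hside with h | h
    · have := h E hE; have := h E' hE'; omega
    · have := h E hE; have := h E' hE'; omega
  have hmono' : ∀ E ∈ T, ∀ E' ∈ T, (f E).card < (f E').card → KeyBtw a E E' := by
    intro E hE E' hE' hlt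
    rcases htri E hE E' hE' with rfl | h | h
    · omega
    · exact h
    · have := hmono E' hE' E hE h; omega
  have hfK : ∀ E, (f E).card ≤ K.card := fun E => Finset.card_le_card (Finset.filter_subset _ _)
  refine potential_bound T (fun E => (f E).card) ?_ _ _ _ ?_ ?_ ?_ ?_ ?_
  · intro E hE E' hE' h
    rcases htri E hE E' hE' with h' | h' | h'
    · exact h'
    · have := hmono E hE E' hE' h'; simp only at h; omega
    · have := hmono E' hE' E hE h'; simp only at h; omega
  · exact fun E hE => Finset.card_pos.2 ⟨E, hmem E hE⟩
  · intro x hx y hy z hz hxy hyz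
    have bxy := hmono' x hx y hy hxy
    have byz := hmono' y hy z hz hyz
    have bxz := hmono' x hx z hz (hxy.trans hyz)
    have ht := h3 y hy x (hT hx) bxy
    have hzx : (nbhd K (insert a I) τ' y) ⊆ ((f z).erase z) \ f x := by
      intro w hw
      simp only [nbhd, Finset.mem_filter] at hw
      have hwx := hw.2 x (Finset.mem_insert_of_mem (hT hx))
      have hwz := hw.2 z (Finset.mem_insert_of_mem (hT hz))
      have h2x := h2 x hx
      have h2z := h2 z hz
      simp only [hf, Finset.mem_sdiff, Finset.mem_erase, Finset.mem_filter, KeyBtw, hw.1,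
        true_and] at bxy byz bxz ⊢
      refine ⟨⟨?_, ?_⟩, ?_⟩
      · rintro rfl
        have := hwz (by omega)
        omega
      · by_contra hc
        have : ¬ ((y < x ∧ x ≤ w) ∨ (w ≤ x ∧ x < y)) := fun h => by have := hwx h; omega
        have : ¬ ((y < z ∧ z ≤ w) ∨ (w ≤ z ∧ z < y)) := fun h => by have := hwz h; omega
        omega
      · intro hc
        have : ¬ ((y < x ∧ x ≤ w) ∨ (w ≤ x ∧ x < y)) := fun h => by have := hwx h; omega
        omega
    have h := Finset.card_le_card hzx
    rw [Finset.card_sdiff_of_subset (hsub x hx z hz bxz),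
      Finset.card_erase_of_mem (hmem z hz)] at h
    refine Nat.log_mono_right ?_
    omega
  · intro E hE
    refine Nat.log_mono_right (Nat.le_succ_of_le (Finset.card_le_card ?_))
    intro w hw
    simp only [hf, nbhd, Finset.mem_filter] at hw ⊢
    refine ⟨hw.1, fun F hF hb => h1 E hE F hF ?_⟩
    simp only [KeyBtw]
    omega
  · exact fun E _ => nbhdRank_le _ _ _ _
  · exact fun E _ => Nat.log_mono_right (Nat.le_succ_of_le (hfK E))

/-- One access step: the touched set `T` is paid for by the drop of the potential, up to a
logarithmic amount. -/
lemma access_potential_bound (K I T : Finset ℤ) (a t : ℤ) (τ τ' : ℤ → ℤ) (hIK : I ⊆ K)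
    (hT : T ⊆ I) (haI : a ∉ I) (h1 : ∀ E ∈ T, ∀ F ∈ I, KeyBtw a F E → τ F < τ E)
    (hlt : ∀ E ∈ I, τ E < t) (hsame : ∀ E ∈ I, E ∉ T → τ' E = τ E)
    (h2 : ∀ E ∈ T, t ≤ τ' E) (h3 : ∀ E ∈ T, ∀ F ∈ I, KeyBtw a F E → τ' E = t) :
    ∑ E ∈ insert a I, nbhdRank K (insert a I) τ' E + T.card
      ≤ ∑ E ∈ I, nbhdRank K I τ E + (9 * Nat.log 2 (K.card + 1) + 4) := by
  have hne : ∀ E ∈ T, E ≠ a := fun E hE h => haI (h ▸ hT hE)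
  have hR := side_potential_bound K I (T.filter (fun E => a < E)) a t τ τ' hIK
    ((Finset.filter_subset _ _).trans hT) (Or.inl fun E hE => (Finset.mem_filter.1 hE).2)
    (fun E hE => h1 E (Finset.mem_filter.1 hE).1) (fun E hE => h2 E (Finset.mem_filter.1 hE).1)
    (fun E hE => h3 E (Finset.mem_filter.1 hE).1)
  have hL := side_potential_bound K I (T.filter (fun E => ¬ a < E)) a t τ τ' hIK
    ((Finset.filter_subset _ _).trans hT)
    (Or.inr fun E hE => by
      have h := Finset.mem_filter.1 hE
      have := hne E h.1
      omega)
    (fun E hE => h1 E (Finset.mem_filter.1 hE).1) (fun E hE => h2 E (Finset.mem_filter.1 hE).1)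
    (fun E hE => h3 E (Finset.mem_filter.1 hE).1)
  have hcard := Finset.card_filter_add_card_filter_not (s := T) (fun E => a < E)
  have hs1 := Finset.sum_filter_add_sum_filter_not T (fun E => a < E)
    (nbhdRank K (insert a I) τ')
  have hs2 := Finset.sum_filter_add_sum_filter_not T (fun E => a < E) (nbhdRank K I τ)
  have hd1 := Finset.sum_sdiff (f := nbhdRank K (insert a I) τ') hT
  have hd2 := Finset.sum_sdiff (f := nbhdRank K I τ) hT
  have hrest : ∑ E ∈ I \ T, nbhdRank K (insert a I) τ' E ≤ ∑ E ∈ I \ T, nbhdRank K I τ E := by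
    refine Finset.sum_le_sum fun E hE => Nat.log_mono_right (Nat.succ_le_succ
      (Finset.card_le_card fun x hx => ?_))
    obtain ⟨hEI, hET⟩ := Finset.mem_sdiff.1 hE
    simp only [nbhd, Finset.mem_filter] at hx ⊢
    refine ⟨hx.1, fun F hF hb => ?_⟩
    have h := hx.2 F (Finset.mem_insert_of_mem hF) hb
    have hE' := hsame E hEI hET
    have hEt := hlt E hEI
    by_cases hFT : F ∈ T
    · have := h2 F hFT
      omega
    · rw [hsame F hF hFT, hE'] at h
      exact h
  have ha := nbhdRank_le K (insert a I) τ' a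
  rw [Finset.sum_insert haI]
  omega

/-- Amortized analysis: per-step bounds on potential change and cost sum up. -/
lemma sum_cost_le (Θ : Finset ℤ) (Ψ : ℤ → ℕ) (cost : ℤ → ℕ) (C : ℕ) (e : ℤ)
    (hstep : ∀ t ∈ Θ, ∀ u, t < u → u ≤ e → (∀ s ∈ Θ, s < u → s ≤ t) →
      Ψ u + cost t ≤ Ψ t + C)
    (h0 : ∀ u, (∀ s ∈ Θ, u ≤ s) → Ψ u = 0) (m : ℕ) :
    ∀ u ≤ e, (Θ.filter (· < u)).card = m →
      Ψ u + ∑ t ∈ Θ.filter (· < u), cost t ≤ m * C := by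
  induction m with
  | zero =>
    intro u _ hu
    rw [Finset.card_eq_zero] at hu
    rw [hu, h0 u (fun s hs => ?_)]
    · simp
    · by_contra hc
      have : s ∈ Θ.filter (· < u) := Finset.mem_filter.2 ⟨hs, by omega⟩
      rw [hu] at this
      simp at this
  | succ m ih =>
    intro u hue hu
    have hne : (Θ.filter (· < u)).Nonempty := Finset.card_pos.1 (by omega)
    obtain ⟨t, ht, hmax⟩ := Finset.exists_max_image _ id hne
    obtain ⟨htΘ, htu⟩ := Finset.mem_filter.1 ht
    have hmax' : ∀ s ∈ Θ, s < u → s ≤ t := fun s hs hsu =>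
      hmax s (Finset.mem_filter.2 ⟨hs, hsu⟩)
    have hsplit : Θ.filter (· < u) = insert t (Θ.filter (· < t)) := by
      ext s
      simp only [Finset.mem_filter, Finset.mem_insert]
      constructor
      · rintro ⟨h, h'⟩
        rcases (hmax' s h h').lt_or_eq with h'' | h''
        · exact Or.inr ⟨h, h''⟩
        · exact Or.inl h''
      · rintro (rfl | ⟨h, h'⟩)
        · exact ⟨htΘ, htu⟩
        · exact ⟨h, by omega⟩
    have hnot : t ∉ Θ.filter (· < t) := by simp
    rw [hsplit, Finset.card_insert_of_notMem hnot] at hu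
    have h1 := ih t (by omega) (by omega)
    have h2 := hstep t htΘ u htu hue hmax'
    rw [hsplit, Finset.sum_insert hnot, Nat.succ_mul]
    omega

/-- `y` lies weakly between `x` and `z`. -/
def KeyIn (x y z : ℤ) : Prop := (x ≤ y ∧ y ≤ z) ∨ (z ≤ y ∧ y ≤ x)

/-- `S` is the full point set of an execution of GREEDY on `X`. -/
structure GreedyExecution (X S : Finset Pt) : Prop where
  key_inj : ∀ a ∈ X, ∀ b ∈ X, a.1 = b.1 → a = b
  time_inj : ∀ a ∈ X, ∀ b ∈ X, a.2 = b.2 → a = b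
  subset : X ⊆ S
  exists_access : ∀ r ∈ S, ∃ a ∈ X, a.2 = r.2
  touch_iff : ∀ a ∈ X, ∀ x, x ≠ a.1 → ((x, a.2) ∈ S ↔ ∃ s < a.2, (x, s) ∈ S ∧
    ∀ y u, (y, u) ∈ S → s ≤ u → u < a.2 → KeyIn a.1 y x → y = x ∧ u = s)

lemma time_of_mem_greedyStep {X G : Finset Pt} {t : ℤ} {r : Pt} (h : r ∈ greedyStep X G t) :
    r.2 = t ∧ ∃ a ∈ X, a.2 = t := by
  simp only [greedyStep, Finset.mem_biUnion, Finset.mem_image, Finset.mem_filter] at h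
  obtain ⟨a, ⟨ha, hat⟩, q, _, rfl⟩ := h
  exact ⟨rfl, a, ha, hat⟩

lemma time_of_mem_greedyUpTo {X : Finset Pt} {m : ℕ} {r : Pt} (h : r ∈ greedyUpTo X m) :
    r.2 ≤ m ∧ ∃ a ∈ X, a.2 = r.2 := by
  induction m with
  | zero => simp [greedyUpTo] at h
  | succ m ih =>
    rw [greedyUpTo, Finset.mem_union] at h
    rcases h with h | h
    · have := ih h
      push_cast
      exact ⟨by omega, this.2⟩
    · have := time_of_mem_greedyStep h
      push_cast
      refine ⟨by omega, ?_⟩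
      rw [this.1]
      exact this.2

lemma mem_greedyUpTo_of_le {X : Finset Pt} {m n : ℕ} (hmn : m ≤ n) {r : Pt} (hr : r.2 ≤ m) :
    r ∈ greedyUpTo X n ↔ r ∈ greedyUpTo X m := by
  induction n, hmn using Nat.le_induction with
  | base => rfl
  | succ n hn ih =>
    rw [greedyUpTo, Finset.mem_union, ih]
    refine ⟨fun h => h.resolve_right fun h' => ?_, Or.inl⟩
    have := (time_of_mem_greedyStep h').1
    omega

lemma mem_greedyUpTo_iff_step {X : Finset Pt} {m n : ℕ} (hmn : m + 1 ≤ n) {r : Pt}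
    (hr : r.2 = m + 1) :
    r ∈ greedyUpTo X n ↔ r ∈ greedyStep X (greedyUpTo X m) (m + 1) := by
  rw [mem_greedyUpTo_of_le hmn (by push_cast; omega), greedyUpTo, Finset.mem_union]
  refine ⟨fun h => h.resolve_left fun h' => ?_, Or.inr⟩
  have := (time_of_mem_greedyUpTo h').1
  omega

lemma mem_greedyStep_iff {X G : Finset Pt} (hX : ∀ a ∈ X, ∀ b ∈ X, a.2 = b.2 → a = b) {a : Pt}
    (ha : a ∈ X) {x : ℤ} :
    (x, a.2) ∈ greedyStep X G a.2 ↔ x ≠ a.1 ∧ ∃ s < a.2, (x, s) ∈ X ∪ G ∧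
      ∀ y u, (y, u) ∈ X ∪ G → s ≤ u → u < a.2 → KeyIn a.1 y x → y = x ∧ u = s := by
  simp only [greedyStep, Finset.mem_biUnion, Finset.mem_image, Finset.mem_filter, inRect, KeyIn,
    Prod.mk.injEq, and_true]
  constructor
  · rintro ⟨b, ⟨hb, hba⟩, q, ⟨⟨hq, hqt⟩, hne, hq'⟩, rfl⟩
    obtain rfl := hX b hb a ha hba
    refine ⟨hne, q.2, hqt, hq, fun y u hyu hs hu hin => ?_⟩
    have := hq' (y, u) ⟨hyu, hu⟩ ⟨by omega, by omega, by omega, by simp only; omega⟩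
    exact ⟨congrArg Prod.fst this, congrArg Prod.snd this⟩
  · rintro ⟨hne, s, hs, hxs, h⟩
    refine ⟨a, ⟨ha, rfl⟩, (x, s), ⟨⟨hxs, hs⟩, hne, ?_⟩, rfl⟩
    rintro ⟨y, u⟩ ⟨hyu, hu⟩ ⟨h1, h2, h3, h4⟩
    simp only at h1 h2 h3 h4 hu
    obtain ⟨rfl, rfl⟩ := h y u hyu (by omega) hu (by omega)
    rfl

lemma greedyExecution {n : ℕ} {X : Finset Pt} (hX : IsPermPointSet n X) :
    GreedyExecution X (X ∪ greedyG n X) := by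
  obtain ⟨σ, hσ⟩ := hX
  have hform : ∀ a ∈ X, ∃ t : Fin n, a = (((σ t : ℕ) : ℤ) + 1, ((t : ℕ) : ℤ) + 1) := by
    intro a ha
    rw [hσ] at ha
    obtain ⟨t, _, rfl⟩ := Finset.mem_image.1 ha
    exact ⟨t, rfl⟩
  have htime : ∀ a ∈ X, ∀ b ∈ X, a.2 = b.2 → a = b := by
    intro a ha b hb h
    obtain ⟨t, rfl⟩ := hform a ha
    obtain ⟨t', rfl⟩ := hform b hb
    have : t = t' := Fin.ext (by simp only at h; omega)
    rw [this]
  refine ⟨?_, htime, Finset.subset_union_left, ?_, ?_⟩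
  · intro a ha b hb h
    obtain ⟨t, rfl⟩ := hform a ha
    obtain ⟨t', rfl⟩ := hform b hb
    have : σ t = σ t' := Fin.ext (by simp only at h; omega)
    rw [σ.injective this]
  · intro r hr
    rcases Finset.mem_union.1 hr with h | h
    · exact ⟨r, h, rfl⟩
    · exact (time_of_mem_greedyUpTo h).2
  · intro a ha x hx
    obtain ⟨m, hm, hmn⟩ : ∃ m : ℕ, a.2 = m + 1 ∧ m + 1 ≤ n := by
      obtain ⟨t, rfl⟩ := hform a ha
      exact ⟨t, rfl, t.2⟩
    have hmem : ∀ r : Pt, r.2 < a.2 → (r ∈ X ∪ greedyG n X ↔ r ∈ X ∪ greedyUpTo X m) := by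
      intro r hr
      rw [Finset.mem_union, Finset.mem_union, greedyG,
        mem_greedyUpTo_of_le (show m ≤ n by omega) (by omega)]
    have h1 : (x, a.2) ∈ X ∪ greedyG n X ↔ (x, a.2) ∈ greedyStep X (greedyUpTo X m) a.2 := by
      rw [Finset.mem_union, greedyG, mem_greedyUpTo_iff_step hmn (r := (x, a.2)) hm, hm]
      refine ⟨fun h => h.resolve_left fun h' => hx ?_, Or.inr⟩
      exact congrArg Prod.fst (htime _ h' a ha hm.symm)
    rw [h1, mem_greedyStep_iff htime ha]
    constructor
    · rintro ⟨-, s, hs, hxs, h⟩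
      exact ⟨s, hs, (hmem _ hs).2 hxs, fun y u hyu hsu hu => h y u ((hmem _ hu).1 hyu) hsu hu⟩
    · rintro ⟨s, hs, hxs, h⟩
      exact ⟨hx, s, hs, (hmem _ hs).1 hxs,
        fun y u hyu hsu hu => h y u ((hmem _ hu).2 hyu) hsu hu⟩

lemma headI_toList_mem {α : Type*} [Inhabited α] {s : Finset α} (hs : s.Nonempty) :
    s.toList.headI ∈ s := by
  rw [← Finset.mem_toList]
  cases hl : s.toList with
  | nil => exact absurd (Finset.toList_eq_nil.1 hl) hs.ne_empty
  | cons a l => simp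

lemma OP_spec {X : Finset Pt} {r : Pt} (h : ∃ a ∈ X, a.2 = r.2) :
    OP X r ∈ X ∧ (OP X r).2 = r.2 := by
  obtain ⟨a, ha, har⟩ := h
  have := headI_toList_mem (s := X.filter (fun p => p.2 = r.2))
    ⟨a, Finset.mem_filter.2 ⟨ha, har⟩⟩
  rw [← OP, Finset.mem_filter] at this
  exact this

lemma TopPt_spec {B : Finset Pt} (h : B.Nonempty) :
    TopPt B ∈ B ∧ ∀ q ∈ B, (TopPt B).2 ≤ q.2 := by
  obtain ⟨a, ha, hmin⟩ := Finset.exists_min_image B Prod.snd h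
  have := headI_toList_mem (s := B.filter (fun p => ∀ q ∈ B, p.2 ≤ q.2))
    ⟨a, Finset.mem_filter.2 ⟨ha, hmin⟩⟩
  rw [← TopPt, Finset.mem_filter] at this
  exact this

lemma firstAbove_spec {S : Finset Pt} {p : Pt} {s : ℤ} (hs : (p.1, s) ∈ S) (hsp : s < p.2)
    (hmax : ∀ u, (p.1, u) ∈ S → u < p.2 → u ≤ s) : firstAbove S p = (p.1, s) := by
  have : ((S.filter (fun q => q.1 = p.1 ∧ q.2 < p.2)).image Prod.snd).max = (s : WithBot ℤ) := by
    refine le_antisymm (Finset.max_le fun u hu => ?_) (Finset.le_max ?_)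
    · simp only [Finset.mem_image, Finset.mem_filter] at hu
      obtain ⟨q, ⟨hq, hq1, hq2⟩, rfl⟩ := hu
      exact WithBot.coe_le_coe.2 (hmax _ (by rw [← hq1]; exact hq) hq2)
    · exact Finset.mem_image.2 ⟨(p.1, s), Finset.mem_filter.2 ⟨hs, rfl, hsp⟩, rfl⟩
  rw [firstAbove, this]
  rfl

namespace GreedyExecution

variable {X S : Finset Pt}

lemma exists_key (h : GreedyExecution X S) {x : ℤ} (N : ℕ) :
    ∀ {t : ℤ}, (S.filter (fun r => r.2 < t)).card ≤ N → (x, t) ∈ S →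
      ∃ q ∈ X, q.1 = x ∧ q.2 ≤ t := by
  induction N using Nat.strong_induction_on with
  | _ N ih =>
    intro t hN hxt
    obtain ⟨a, ha, hat⟩ := h.exists_access _ hxt
    simp only at hat
    by_cases hx : x = a.1
    · exact ⟨a, ha, hx.symm, hat.le⟩
    · rw [← hat] at hxt
      obtain ⟨s, hs, hxs, -⟩ := (h.touch_iff a ha x hx).1 hxt
      have hlt : (S.filter (fun r => r.2 < s)).card < (S.filter (fun r => r.2 < t)).card := by
        refine Finset.card_lt_card (Finset.ssubset_iff_of_subset ?_ |>.2 ⟨(x, s), ?_, ?_⟩)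
        · intro r hr
          simp only [Finset.mem_filter] at hr ⊢
          exact ⟨hr.1, by omega⟩
        · exact Finset.mem_filter.2 ⟨hxs, by simp only; omega⟩
        · simp
      obtain ⟨q, hq, hqx, hqs⟩ := ih _ (lt_of_lt_of_le hlt hN) le_rfl hxs
      exact ⟨q, hq, hqx, by omega⟩

/-- Every touched key was accessed no later. -/
lemma exists_access_key (h : GreedyExecution X S) {x t : ℤ} (hxt : (x, t) ∈ S) :
    ∃ q ∈ X, q.1 = x ∧ q.2 ≤ t :=
  h.exists_key _ le_rfl hxt

/-- The nearest previously accessed key on either side is touched. -/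
lemma touch_of_nearest (h : GreedyExecution X S) {a q : Pt} (ha : a ∈ X) (hq : q ∈ X)
    (hqa : q.2 < a.2) (hno : ∀ r ∈ X, r.2 < a.2 → ¬ KeyBtw a.1 r.1 q.1) : (q.1, a.2) ∈ S := by
  have hne : q.1 ≠ a.1 := fun he => by
    have := h.key_inj q hq a ha he
    subst this
    omega
  obtain ⟨r, hr, hmax⟩ := Finset.exists_max_image
    (S.filter (fun r => r.1 = q.1 ∧ r.2 < a.2)) Prod.snd
    ⟨q, Finset.mem_filter.2 ⟨h.subset hq, rfl, hqa⟩⟩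
  simp only [Finset.mem_filter] at hr hmax
  obtain ⟨hrS, hr1, hr2⟩ := hr
  refine (h.touch_iff a ha q.1 hne).2 ⟨r.2, hr2, by rw [← hr1]; exact hrS, ?_⟩
  intro y u hyu hsu hu hin
  obtain ⟨r', hr', hr'y, hr'u⟩ := h.exists_access_key hyu
  by_cases hy : y = q.1
  · subst hy
    have := hmax (q.1, u) ⟨hyu, rfl, hu⟩
    exact ⟨rfl, by simp only at this; omega⟩
  · exfalso
    refine hno r' hr' (by omega) ?_
    have : y ≠ a.1 := fun he => by
      have := h.key_inj r' hr' a ha (by omega)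
      subst this
      omega
    simp only [KeyIn, KeyBtw] at hin ⊢
    omega

end GreedyExecution

section Block

variable {X S B : Finset Pt}

lemma IsBlock.subset (hB : IsBlock X B) : B ⊆ X := by
  obtain ⟨-, ⟨i, j, rfl⟩, -⟩ := hB
  exact Finset.filter_subset _ _

lemma IsBlock.mem_of_time (hB : IsBlock X B) {a b c : Pt} (ha : a ∈ B) (hc : c ∈ B)
    (hb : b ∈ X) (hab : a.2 ≤ b.2) (hbc : b.2 ≤ c.2) : b ∈ B := by
  obtain ⟨-, ⟨i, j, rfl⟩, -⟩ := hB
  simp only [Finset.mem_filter] at ha hc ⊢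
  exact ⟨hb, by omega, by omega⟩

lemma IsBlock.mem_of_key (hB : IsBlock X B) (h : GreedyExecution X S) {a b c : Pt} (ha : a ∈ B)
    (hc : c ∈ B) (hb : b ∈ X) (hin : KeyIn a.1 b.1 c.1) : b ∈ B := by
  obtain ⟨-, -, l, r, hlr⟩ := id hB
  have ha' : a.1 ∈ B.image Prod.fst := Finset.mem_image_of_mem _ ha
  have hc' : c.1 ∈ B.image Prod.fst := Finset.mem_image_of_mem _ hc
  rw [hlr, Finset.mem_Icc] at ha' hc'
  have hb' : b.1 ∈ B.image Prod.fst := by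
    rw [hlr, Finset.mem_Icc]
    simp only [KeyIn] at hin
    omega
  obtain ⟨b', hb'B, hbb'⟩ := Finset.mem_image.1 hb'
  rw [← h.key_inj b' (hB.subset hb'B) b hb hbb']
  exact hb'B

end Block

namespace DecompTree

variable {X S : Finset Pt} (T : DecompTree X)

lemma mem_children {C D : Finset Pt} :
    C ∈ T.children D ↔ C ∈ T.nodes ∧ C ≠ X ∧ T.parent C = D := by
  simp [DecompTree.children]

variable {T}

lemma mem_nodes_of_mem_children {C D : Finset Pt} (h : C ∈ T.children D) : C ∈ T.nodes :=
  (T.mem_children.1 h).1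

lemma ssubset_of_mem_children {C D : Finset Pt} (h : C ∈ T.children D) : C ⊂ D := by
  obtain ⟨hC, hCX, rfl⟩ := T.mem_children.1 h
  exact T.ssubset_parent C hC hCX

lemma card_ne_one_of_mem_children {C D : Finset Pt} (hD : D ∈ T.nodes) (h : C ∈ T.children D) :
    D.card ≠ 1 := by
  obtain ⟨hC, hCX, hp⟩ := T.mem_children.1 h
  exact fun h1 => (T.leaf_iff D hD).2 h1 ⟨C, hC, hCX, hp⟩

lemma existsUnique_child {D : Finset Pt} (hD : D ∈ T.nodes) (h1 : D.card ≠ 1) {x : Pt}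
    (hx : x ∈ D) : ∃! C, C ∈ T.children D ∧ x ∈ C := by
  simpa only [mem_children, and_assoc] using T.children_partition D hD h1 x hx

lemma children_eq_of_mem {C E D : Finset Pt} (hD : D ∈ T.nodes) (hC : C ∈ T.children D)
    (hE : E ∈ T.children D) {x : Pt} (hxC : x ∈ C) (hxE : x ∈ E) : C = E :=
  (existsUnique_child hD (card_ne_one_of_mem_children hD hC)
    ((ssubset_of_mem_children hC).1 hxC)).unique ⟨hC, hxC⟩ ⟨hE, hxE⟩

/-- Two distinct points of a node are separated by two siblings below it. -/
lemma exists_separating {N : Finset Pt} (hN : N ∈ T.nodes) {x y : Pt} (hx : x ∈ N) (hy : y ∈ N)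
    (hxy : x ≠ y) : ∃ D ∈ T.nodes, D ⊆ N ∧ ∃ C ∈ T.children D, ∃ E ∈ T.children D,
      x ∈ C ∧ y ∈ E ∧ y ∉ C ∧ x ∉ E := by
  obtain ⟨D, hD, hmin⟩ := Finset.exists_min_image
    (T.nodes.filter (fun D => D ⊆ N ∧ x ∈ D ∧ y ∈ D)) Finset.card
    ⟨N, Finset.mem_filter.2 ⟨hN, subset_rfl, hx, hy⟩⟩
  obtain ⟨hDn, hDN, hxD, hyD⟩ := Finset.mem_filter.1 hD
  have h1 : D.card ≠ 1 := by
    intro h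
    obtain ⟨z, rfl⟩ := Finset.card_eq_one.1 h
    rw [Finset.mem_singleton] at hxD hyD
    exact hxy (hxD.trans hyD.symm)
  have hnot : ∀ C ∈ T.children D, ¬ (x ∈ C ∧ y ∈ C) := by
    intro C hC hxyC
    have hss := ssubset_of_mem_children hC
    have := hmin C (Finset.mem_filter.2 ⟨mem_nodes_of_mem_children hC, hss.1.trans hDN, hxyC⟩)
    have := Finset.card_lt_card hss
    omega
  obtain ⟨C, ⟨hC, hxC⟩, -⟩ := existsUnique_child hDn h1 hxD
  obtain ⟨E, ⟨hE, hyE⟩, -⟩ := existsUnique_child hDn h1 hyD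
  exact ⟨D, hDn, hDN, C, hC, E, hE, hxC, hyE, fun h => hnot C hC ⟨hxC, h⟩,
    fun h => hnot E hE ⟨h, hyE⟩⟩

variable (T) in
/-- `N` is the node at depth `i` on the path from the root to `x`. -/
def IsAtDepth (x : Pt) : ℕ → Finset Pt → Prop
  | 0, N => N = X
  | i + 1, N => N ∈ T.nodes ∧ N ≠ X ∧ x ∈ N ∧ IsAtDepth x i (T.parent N)

lemma IsAtDepth.mem_nodes {x : Pt} {i : ℕ} {N : Finset Pt} (h : T.IsAtDepth x i N) :
    N ∈ T.nodes := by
  cases i with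
  | zero => rw [show N = X from h]; exact T.root_mem
  | succ i => exact h.1

lemma IsAtDepth.unique {x : Pt} {i : ℕ} : ∀ {N N' : Finset Pt}, T.IsAtDepth x i N →
    T.IsAtDepth x i N' → N = N' := by
  induction i with
  | zero => exact fun h h' => Eq.trans h (Eq.symm h')
  | succ i ih =>
    rintro N N' ⟨hN, hNX, hx, h⟩ ⟨hN', hNX', hx', h'⟩
    exact children_eq_of_mem h.mem_nodes (T.mem_children.2 ⟨hN, hNX, rfl⟩)
      (T.mem_children.2 ⟨hN', hNX', (ih h h').symm⟩) hx hx'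

lemma IsAtDepth.subset {x : Pt} {i : ℕ} (j : ℕ) : ∀ {N N' : Finset Pt}, T.IsAtDepth x i N →
    T.IsAtDepth x (i + j) N' → N' ⊆ N := by
  induction j with
  | zero => exact fun h h' => (h'.unique h).subset
  | succ j ih =>
    rintro N N' h ⟨hN', hNX', -, h'⟩
    exact (T.ssubset_parent N' hN' hNX').1.trans (ih h h')

lemma exists_isAtDepth {x : Pt} (m : ℕ) : ∀ {N : Finset Pt}, N ∈ T.nodes → x ∈ N →
    X.card - N.card ≤ m → ∃ i, T.IsAtDepth x i N := by
  induction m with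
  | zero =>
    intro N hN hx hm
    exact ⟨0, Finset.eq_of_subset_of_card_le (T.isBlock_nodes N hN).subset (by omega)⟩
  | succ m ih =>
    intro N hN hx hm
    by_cases hNX : N = X
    · exact ⟨0, hNX⟩
    · have hss := T.ssubset_parent N hN hNX
      have hlt := Finset.card_lt_card hss
      obtain ⟨i, hi⟩ := ih (T.parent_mem N hN hNX) (hss.1 hx) (by omega)
      exact ⟨i + 1, hN, hNX, hx, hi⟩

/-- Nodes sharing a point are nested, with no node strictly between a node and its parent. -/
lemma eq_or_parent_subset {A B : Finset Pt} (hA : A ∈ T.nodes) (hAX : A ≠ X) (hB : B ∈ T.nodes)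
    (hBX : B ≠ X) {x : Pt} (hxA : x ∈ A) (hxB : x ∈ B) :
    A = B ∨ T.parent A ⊆ B ∨ T.parent B ⊆ A := by
  obtain ⟨i, hi⟩ := exists_isAtDepth _ hA hxA le_rfl
  obtain ⟨j, hj⟩ := exists_isAtDepth _ hB hxB le_rfl
  cases i with
  | zero => exact absurd hi hAX
  | succ i =>
    cases j with
    | zero => exact absurd hj hBX
    | succ j =>
      rcases lt_trichotomy i j with h | rfl | h
      · obtain ⟨d, rfl⟩ := Nat.exists_eq_add_of_le (show i + 1 ≤ j by omega)
        exact Or.inr (Or.inr (hi.subset d hj.2.2.2))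
      · exact Or.inl (hi.unique hj)
      · obtain ⟨d, rfl⟩ := Nat.exists_eq_add_of_le (show j + 1 ≤ i by omega)
        exact Or.inr (Or.inl (hj.subset d hi.2.2.2))

lemma top_mem {N : Finset Pt} (hN : N ∈ T.nodes) : TopPt N ∈ N :=
  (TopPt_spec (T.isBlock_nodes N hN).1).1

lemma top_le {N : Finset Pt} (hN : N ∈ T.nodes) {q : Pt} (hq : q ∈ N) : (TopPt N).2 ≤ q.2 :=
  (TopPt_spec (T.isBlock_nodes N hN).1).2 q hq

lemma node_subset {N : Finset Pt} (hN : N ∈ T.nodes) : N ⊆ X := (T.isBlock_nodes N hN).subset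

lemma eq_top_of_le (h : GreedyExecution X S) {N : Finset Pt} (hN : N ∈ T.nodes) {q : Pt}
    (hq : q ∈ N) (hle : q.2 ≤ (TopPt N).2) : q = TopPt N :=
  h.time_inj q (node_subset hN hq) _ (node_subset hN (top_mem hN))
    (le_antisymm hle (top_le hN hq))

variable (T) in
/-- The nodes not containing the topmost point of their parent. -/
noncomputable def lateNodes : Finset (Finset Pt) :=
  T.nodes.filter (fun A => A ≠ X ∧ TopPt (T.parent A) ∉ A)

lemma card_lateNodes_le (h : GreedyExecution X S) : T.lateNodes.card ≤ X.card := by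
  have key : ∀ A ∈ T.lateNodes, ∀ B ∈ T.lateNodes, TopPt A = TopPt B → ¬ T.parent A ⊆ B := by
    intro A hA B hB hAB hsub
    obtain ⟨hAn, hAX, hAt⟩ := Finset.mem_filter.1 hA
    have hBn := (Finset.mem_filter.1 hB).1
    have hPn := T.parent_mem A hAn hAX
    refine hAt ?_
    have h1 := top_le hBn (hsub (top_mem hPn))
    rw [← hAB] at h1
    rw [← eq_top_of_le h hPn ((T.ssubset_parent A hAn hAX).1 (top_mem hAn)) h1]
    exact top_mem hAn
  refine Finset.card_le_card_of_injOn TopPt ?_ ?_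
  · intro A hA
    exact node_subset (Finset.mem_filter.1 hA).1 (top_mem (Finset.mem_filter.1 hA).1)
  · intro A hA B hB hAB
    obtain ⟨hAn, hAX, -⟩ := Finset.mem_filter.1 (Finset.mem_coe.1 hA)
    obtain ⟨hBn, hBX, -⟩ := Finset.mem_filter.1 (Finset.mem_coe.1 hB)
    rcases eq_or_parent_subset hAn hAX hBn hBX (top_mem hAn) (by rw [hAB]; exact top_mem hBn)
      with h' | h' | h'
    · exact h'
    · exact absurd h' (key A hA B hB hAB)
    · exact absurd h' (key B hB A hA hAB.symm)

lemma card_late_children {D : Finset Pt} (hD : D ∈ T.nodes) (h1 : D.card ≠ 1) :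
    (T.lateNodes.filter (fun A => T.parent A = D)).card + 1 = (T.children D).card := by
  obtain ⟨C, ⟨hC, hxC⟩, huniq⟩ := existsUnique_child hD h1 (top_mem hD)
  have : T.lateNodes.filter (fun A => T.parent A = D) = (T.children D).erase C := by
    ext A
    simp only [lateNodes, Finset.mem_filter, Finset.mem_erase, mem_children]
    constructor
    · rintro ⟨⟨hA, hAX, hAt⟩, rfl⟩
      refine ⟨?_, hA, hAX, rfl⟩
      rintro rfl
      exact hAt hxC
    · rintro ⟨hne, hA, hAX, rfl⟩
      exact ⟨⟨hA, hAX, fun ht => hne (huniq A ⟨T.mem_children.2 ⟨hA, hAX, rfl⟩, ht⟩)⟩, rfl⟩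
  rw [this, Finset.card_erase_add_one hC]

end DecompTree

namespace GreedyExecution

variable {X S : Finset Pt}

lemma keyBtw_of_mem_block (h : GreedyExecution X S) {C : Finset Pt} (hC : IsBlock X C)
    {c c' r : Pt} {p : ℤ} (hc : c ∈ C) (hc' : c' ∈ C) (hr : r ∈ X) (hrC : r ∉ C)
    (hb : KeyBtw c.1 r.1 p) : KeyBtw c'.1 r.1 p := by
  by_contra hcon
  refine hrC (hC.mem_of_key h hc hc' hr ?_)
  simp only [KeyBtw, KeyIn] at *
  omega

/-- A point outside the block `C` accessed before some element of `C` is accessed before the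
topmost point of `C`. -/
lemma lt_top_of_notMem {C : Finset Pt} (hC : IsBlock X C) {c r : Pt} (hc : c ∈ C) (hr : r ∈ X)
    (hrC : r ∉ C) (hle : r.2 ≤ c.2) : r.2 < (TopPt C).2 := by
  by_contra hcon
  exact hrC (hC.mem_of_time (TopPt_spec hC.1).1 hc hr (by omega) hle)

lemma top_lt_of_ne (h : GreedyExecution X S) {C : Finset Pt} (hC : IsBlock X C) {c : Pt}
    (hc : c ∈ C) (hne : c ≠ TopPt C) : (TopPt C).2 < c.2 := by
  obtain ⟨h1, h2⟩ := TopPt_spec hC.1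
  refine lt_of_le_of_ne (h2 c hc) fun he => hne ?_
  exact h.time_inj c (hC.subset hc) _ (hC.subset h1) he.symm

/-- A non-topmost point of a block only touches outside keys that are adjacent to the block among
the keys accessed before the block. -/
lemma not_keyBtw_of_touch (h : GreedyExecution X S) {C : Finset Pt} (hC : IsBlock X C) {p : ℤ}
    (hp : ∀ c ∈ C, c.1 ≠ p) (m : ℕ) : ∀ b ∈ C, (b.2 - (TopPt C).2).toNat ≤ m → b ≠ TopPt C →
      (p, b.2) ∈ S → ∀ q ∈ X, q.2 < (TopPt C).2 → ¬ KeyBtw b.1 q.1 p := by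
  obtain ⟨htop, hle⟩ := TopPt_spec hC.1
  induction m with
  | zero =>
    intro b hb hm hne
    have := h.top_lt_of_ne hC hb hne
    omega
  | succ m ih =>
    intro b hb hm hne hpb q hq hqt hbtw
    have hbt := h.top_lt_of_ne hC hb hne
    have hnotC : ∀ r : Pt, r.2 < (TopPt C).2 → r ∉ C := fun r hr hrC => by
      have := hle r hrC
      omega
    obtain ⟨s, hs, hps, hempty⟩ := (h.touch_iff b (hC.subset hb) p (hp b hb).symm).1 hpb
    obtain ⟨R, hR, hRmin⟩ := Finset.exists_min_image
      (X.filter (fun r => r.2 < (TopPt C).2 ∧ KeyBtw (TopPt C).1 r.1 p))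
      (fun r => |r.1 - (TopPt C).1|)
      ⟨q, Finset.mem_filter.2 ⟨hq, hqt, h.keyBtw_of_mem_block hC hb htop hq (hnotC q hqt) hbtw⟩⟩
    obtain ⟨hRX, hRt, hRb⟩ := Finset.mem_filter.1 hR
    have hRC := hnotC R hRt
    have hRS : (R.1, (TopPt C).2) ∈ S := by
      refine h.touch_of_nearest (hC.subset htop) hRX hRt fun r hr hrt hrb => ?_
      have hrp : KeyBtw (TopPt C).1 r.1 p := by
        simp only [KeyBtw] at *
        omega
      have := hRmin r (Finset.mem_filter.2 ⟨hr, hrt, hrp⟩)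
      simp only [KeyBtw] at hrb hRb
      rcases abs_cases (R.1 - (TopPt C).1) with h1 | h1 <;>
        rcases abs_cases (r.1 - (TopPt C).1) with h2 | h2 <;> omega
    have hbR := h.keyBtw_of_mem_block hC htop hb hRX hRC hRb
    have hts : (TopPt C).2 < s := by
      by_contra hcon
      have := (hempty _ _ hRS (by omega) hbt (by simp only [KeyIn, KeyBtw] at *; omega)).1
      simp only [KeyBtw] at hbR
      omega
    obtain ⟨b', hb', hb's⟩ := h.exists_access _ hps
    simp only at hb's
    have hb'C : b' ∈ C := hC.mem_of_time htop hb hb' (by omega) (by omega)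
    refine ih b' hb'C (by omega) ?_ (by rw [hb's]; exact hps) R hRX hRt
      (h.keyBtw_of_mem_block hC htop hb'C hRX hRC hRb)
    rintro rfl
    omega

lemma not_keyBtw (h : GreedyExecution X S) {C : Finset Pt} (hC : IsBlock X C) {p : ℤ}
    (hp : ∀ c ∈ C, c.1 ≠ p) {b q : Pt} (hb : b ∈ C) (hne : b ≠ TopPt C) (hpb : (p, b.2) ∈ S)
    (hq : q ∈ X) (hqt : q.2 < (TopPt C).2) : ¬ KeyBtw b.1 q.1 p :=
  h.not_keyBtw_of_touch hC hp _ b hb le_rfl hne hpb q hq hqt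

/-- An outside key touched during a block is already touched by the topmost point of the block. -/
lemma touch_top (h : GreedyExecution X S) {C : Finset Pt} (hC : IsBlock X C) {p : ℤ}
    (hp : ∀ c ∈ C, c.1 ≠ p) {b : Pt} (hb : b ∈ C) (hpb : (p, b.2) ∈ S) :
    (p, (TopPt C).2) ∈ S := by
  obtain ⟨htop, hle⟩ := TopPt_spec hC.1
  by_cases hne : b = TopPt C
  · rw [← hne]
    exact hpb
  · obtain ⟨P, hP, rfl, hPb⟩ := h.exists_access_key hpb
    have hPC : P ∉ C := fun hPC => hp P hPC rfl
    refine h.touch_of_nearest (hC.subset htop) hP (lt_top_of_notMem hC hb hP hPC hPb)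
      fun r hr hrt hrb => ?_
    have hrC : r ∉ C := fun hrC => by
      have := hle r hrC
      omega
    exact h.not_keyBtw hC hp hb hne hpb hr hrt (h.keyBtw_of_mem_block hC htop hb hr hrC hrb)

end GreedyExecution

/-- The accesses `b`, `a` are consecutive touches of key `p`, and `a` has a key strictly between
`b` and `p`. -/
structure IsZig (X S : Finset Pt) (a b : Pt) (p : ℤ) : Prop where
  mem_left : a ∈ X
  mem_right : b ∈ X
  lt : b.2 < a.2
  touch_left : (p, a.2) ∈ S
  touch_right : (p, b.2) ∈ S
  btw : KeyBtw b.1 a.1 p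
  empty : ∀ y u, (y, u) ∈ S → b.2 ≤ u → u < a.2 → KeyIn a.1 y p → y = p ∧ u = b.2

lemma isZig_of_inMMC {n : ℕ} {X : Finset Pt} (hX : IsPermPointSet n X) {r : Pt}
    (hr : r ∈ greedyG n X) (hm : inMMC X (greedyG n X) r) :
    IsZig X (X ∪ greedyG n X) (CP X (greedyG n X) r).1 (CP X (greedyG n X) r).2 r.1 := by
  have h := greedyExecution hX
  have hrS : r ∈ X ∪ greedyG n X := Finset.mem_union_right _ hr
  obtain ⟨ha, har⟩ := OP_spec (h.exists_access r hrS)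
  have ha1 : (CP X (greedyG n X) r).1 = OP X r := rfl
  have hne : r.1 ≠ (OP X r).1 := by
    unfold inMMC at hm
    rw [ha1] at hm
    omega
  have hrS' : (r.1, (OP X r).2) ∈ X ∪ greedyG n X := by rw [har]; exact hrS
  obtain ⟨s, hs, hrs, hempty⟩ := (h.touch_iff _ ha _ hne).1 hrS'
  have hfirst : firstAbove (X ∪ greedyG n X) r = (r.1, s) := by
    refine firstAbove_spec hrs (by omega) fun u hu hur => ?_
    by_contra hcon
    have := (hempty _ _ hu (by omega) (by omega) (by simp only [KeyIn]; omega)).2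
    omega
  have hb1 : (CP X (greedyG n X) r).2 = OP X (r.1, s) := by rw [CP, hfirst]
  obtain ⟨hb, hbs⟩ := OP_spec (h.exists_access _ hrs)
  simp only at hbs
  unfold inMMC at hm
  rw [ha1, hb1] at hm ⊢
  refine ⟨ha, hb, by omega, hrS', by rw [hbs]; exact hrs, ?_, by rw [hbs]; exact hempty⟩
  simp only [KeyBtw]
  omega

namespace IsZig

variable {X S : Finset Pt}

lemma exists_access_key {a b : Pt} {p : ℤ} (hz : IsZig X S a b p) (h : GreedyExecution X S) :
    ∃ P ∈ X, P.1 = p ∧ P.2 ≤ b.2 :=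
  h.exists_access_key hz.touch_right

lemma left_notMem {a b P : Pt} {E : Finset Pt} (hz : IsZig X S a b P.1)
    (h : GreedyExecution X S) (hE : IsBlock X E) (hP : P ∈ E) (hbE : b ∉ E) : a ∉ E := by
  intro haE
  obtain ⟨Q, hQ, hQp, hQb⟩ := hz.exists_access_key h
  obtain rfl := h.key_inj Q hQ P (hE.subset hP) hQp
  exact hbE (hE.mem_of_time hP haE hz.mem_right hQb hz.lt.le)

lemma eq_of_sibling_aux {a₁ b₁ a₂ b₂ P₁ P₂ : Pt} {C E : Finset Pt} (h : GreedyExecution X S)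
    (hC : IsBlock X C) (hE : IsBlock X E) (hCE : ∀ x ∈ C, x ∉ E)
    (hz₁ : IsZig X S a₁ b₁ P₁.1) (hz₂ : IsZig X S a₂ b₂ P₂.1) (hb₁ : b₁ ∈ C) (hb₂ : b₂ ∈ C)
    (ha₁ : a₁ ∉ C) (hP₁ : P₁ ∈ E) (hP₂ : P₂ ∈ E) : ¬ b₁.2 < b₂.2 := by
  intro hlt
  have hXP₁ := hE.subset hP₁
  have hPC : ∀ P ∈ E, P ∉ C := fun P hP hPC => hCE P hPC hP
  have haE := hz₁.left_notMem h hE hP₁ (hCE _ hb₁)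
  obtain ⟨Q, hQ, hQp, hQb⟩ := hz₁.exists_access_key h
  obtain rfl := h.key_inj Q hQ P₁ hXP₁ hQp
  have hQt := GreedyExecution.lt_top_of_notMem hC hb₁ hQ (hPC _ hP₁) hQb
  have hne : b₂ ≠ TopPt C := by
    rintro rfl
    have := (TopPt_spec hC.1).2 b₁ hb₁
    omega
  have hadj := h.not_keyBtw hC (p := P₂.1)
    (fun c hc hcP => hCE c hc (by
      rw [h.key_inj c (hC.subset hc) P₂ (hE.subset hP₂) hcP]; exact hP₂))
    hb₂ hne hz₂.touch_right hQ hQt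
  have ha₁t : b₂.2 < a₁.2 := by
    by_contra hcon
    exact ha₁ (hC.mem_of_time hb₁ hb₂ hz₁.mem_left hz₁.lt.le (by omega))
  have k1 : ¬ KeyIn b₁.1 Q.1 b₂.1 := fun hk =>
    hPC _ hP₁ (hC.mem_of_key h hb₁ hb₂ hQ hk)
  have k2 : ¬ KeyIn Q.1 b₁.1 P₂.1 := fun hk =>
    hCE _ hb₁ (hE.mem_of_key h hP₁ hP₂ hz₁.mem_right hk)
  have k3 : ¬ KeyIn Q.1 b₂.1 P₂.1 := fun hk =>
    hCE _ hb₂ (hE.mem_of_key h hP₁ hP₂ hz₂.mem_right hk)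
  have k4 : ¬ KeyIn Q.1 a₁.1 P₂.1 := fun hk =>
    haE (hE.mem_of_key h hP₁ hP₂ hz₁.mem_left hk)
  have hbtw := hz₁.btw
  have := (hz₁.empty _ _ hz₂.touch_right hlt.le ha₁t (by
    simp only [KeyIn, KeyBtw] at *
    omega)).2
  omega

lemma left_eq_of_right_eq_aux {a₁ a₂ b : Pt} {p : ℤ} (hz₁ : IsZig X S a₁ b p)
    (hz₂ : IsZig X S a₂ b p) : ¬ a₁.2 < a₂.2 := by
  intro hlt
  have := (hz₂.empty _ _ hz₁.touch_left hz₁.lt.le hlt (by simp only [KeyIn]; omega)).2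
  have := hz₁.lt
  omega

/-- A zig leaving the child `C` towards its sibling `E` is determined by `C` and `E`. -/
lemma eq_of_sibling {a₁ b₁ a₂ b₂ P₁ P₂ : Pt} {C E : Finset Pt} (h : GreedyExecution X S)
    (hC : IsBlock X C) (hE : IsBlock X E) (hCE : ∀ x ∈ C, x ∉ E)
    (hz₁ : IsZig X S a₁ b₁ P₁.1) (hz₂ : IsZig X S a₂ b₂ P₂.1) (hb₁ : b₁ ∈ C) (hb₂ : b₂ ∈ C)
    (ha₁ : a₁ ∉ C) (ha₂ : a₂ ∉ C) (hP₁ : P₁ ∈ E) (hP₂ : P₂ ∈ E) : a₁ = a₂ ∧ b₁ = b₂ := by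
  have n1 := eq_of_sibling_aux h hC hE hCE hz₁ hz₂ hb₁ hb₂ ha₁ hP₁ hP₂
  have n2 := eq_of_sibling_aux h hC hE hCE hz₂ hz₁ hb₂ hb₁ ha₂ hP₂ hP₁
  obtain rfl := h.time_inj b₁ hz₁.mem_right b₂ hz₂.mem_right (by omega)
  have k1 : ¬ KeyIn P₁.1 b₁.1 P₂.1 := fun hk =>
    hCE _ hb₁ (hE.mem_of_key h hP₁ hP₂ hz₁.mem_right hk)
  have k2 : ¬ KeyIn P₁.1 a₁.1 P₂.1 := fun hk =>
    hz₁.left_notMem h hE hP₁ (hCE _ hb₁) (hE.mem_of_key h hP₁ hP₂ hz₁.mem_left hk)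
  have k3 : ¬ KeyIn P₁.1 a₂.1 P₂.1 := fun hk =>
    hz₂.left_notMem h hE hP₂ (hCE _ hb₁) (hE.mem_of_key h hP₁ hP₂ hz₂.mem_left hk)
  have hbtw₁ := hz₁.btw
  have hbtw₂ := hz₂.btw
  have e1 := hz₁.empty _ _ hz₂.touch_right le_rfl hz₁.lt
  have e2 := hz₂.empty _ _ hz₁.touch_right le_rfl hz₂.lt
  have hPP : P₁.1 = P₂.1 := by
    simp only [KeyIn, KeyBtw] at *
    by_cases hc : (a₁.1 ≤ P₂.1 ∧ P₂.1 ≤ P₁.1) ∨ (P₁.1 ≤ P₂.1 ∧ P₂.1 ≤ a₁.1)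
    · exact (e1 hc).1.symm
    · exact (e2 (by omega)).1
  rw [← hPP] at hz₂
  have n3 := left_eq_of_right_eq_aux hz₁ hz₂
  have n4 := left_eq_of_right_eq_aux hz₂ hz₁
  exact ⟨h.time_inj a₁ hz₁.mem_left a₂ hz₂.mem_left (by omega), rfl⟩

/-- If `b` and the key `p` lie outside the block `A` containing `a`, then `a` is the topmost
point of `A`. -/
lemma left_eq_top {a b : Pt} {p : ℤ} {A : Finset Pt} (h : GreedyExecution X S)
    (hA : IsBlock X A) (hz : IsZig X S a b p) (ha : a ∈ A) (hb : b ∉ A)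
    (hp : ∀ c ∈ A, c.1 ≠ p) : a = TopPt A := by
  by_contra hne
  obtain ⟨htop, hle⟩ := TopPt_spec hA.1
  have hta := h.top_lt_of_ne hA ha hne
  have hbt : b.2 < (TopPt A).2 := GreedyExecution.lt_top_of_notMem hA ha hz.mem_right hb hz.lt.le
  obtain ⟨P, hP, hPp, -⟩ := hz.exists_access_key h
  have k1 : ¬ KeyIn a.1 (TopPt A).1 p := fun hk => by
    have := (hz.empty (TopPt A).1 (TopPt A).2 (h.subset (hA.subset htop)) hbt.le hta hk).2
    omega
  have k2 : ¬ KeyIn a.1 P.1 (TopPt A).1 := fun hk => hp P (hA.mem_of_key h ha htop hP hk) hPp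
  have k3 : ¬ KeyIn a.1 b.1 (TopPt A).1 := fun hk => hb (hA.mem_of_key h ha htop hz.mem_right hk)
  have hbtw := hz.btw
  have htouch : (p, (TopPt A).2) ∈ S := by
    refine (h.touch_iff _ (hA.subset htop) p (hp _ htop).symm).2
      ⟨b.2, hbt, hz.touch_right, fun y u hyu hbu hut hin => ?_⟩
    by_cases hy : KeyIn a.1 y p
    · exact hz.empty y u hyu hbu (by omega) hy
    · exfalso
      obtain ⟨q, hq, hqy, hqu⟩ := h.exists_access_key hyu
      have := hle q (hA.mem_of_key h ha htop hq (by
        simp only [KeyIn, KeyBtw] at *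
        omega))
      omega
  have := (hz.empty _ _ htouch hbt.le hta (by simp only [KeyIn]; omega)).2
  omega

/-- A zig inside `D` whose touched key lies outside `D` is determined by `a` and a side. -/
lemma not_lt_of_left_eq {a b₁ b₂ : Pt} {p₁ p₂ : ℤ} {D : Finset Pt} (h : GreedyExecution X S)
    (hD : IsBlock X D) (hz₁ : IsZig X S a b₁ p₁) (hz₂ : IsZig X S a b₂ p₂) (hb₁ : b₁ ∈ D)
    (hb₂ : b₂ ∈ D) (hp₁ : ∀ c ∈ D, c.1 ≠ p₁) (hp₂ : ∀ c ∈ D, c.1 ≠ p₂)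
    (hside : a.1 < p₁ ↔ a.1 < p₂) : ¬ b₁.2 < b₂.2 := by
  intro hlt
  obtain ⟨P, hP, rfl, hPb⟩ := hz₁.exists_access_key h
  have hPt := GreedyExecution.lt_top_of_notMem hD hb₁ hP (fun hPD => hp₁ P hPD rfl) hPb
  have hne : b₂ ≠ TopPt D := by
    rintro rfl
    have := (TopPt_spec hD.1).2 b₁ hb₁
    omega
  have hadj := h.not_keyBtw hD hp₂ hb₂ hne hz₂.touch_right hP hPt
  have hbtw₁ := hz₁.btw
  have hbtw₂ := hz₂.btw
  have := (hz₁.empty _ _ hz₂.touch_right hlt.le hz₂.lt (by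
    simp only [KeyIn, KeyBtw] at *
    omega)).2
  omega

end IsZig

/-- The last time before `u` at which some key of `E` is touched (junk if there is none). -/
noncomputable def lastTouch (S E : Finset Pt) (u : ℤ) : ℤ :=
  ((S.filter (fun r => r.2 < u ∧ ∃ P ∈ E, P.1 = r.1)).image Prod.snd).max.unbotD 0

lemma lastTouch_spec {S E : Finset Pt} {u : ℤ} {r P : Pt} (hr : r ∈ S) (hru : r.2 < u)
    (hP : P ∈ E) (hPr : P.1 = r.1) :
    r.2 ≤ lastTouch S E u ∧ lastTouch S E u < u ∧ ∃ Q ∈ E, (Q.1, lastTouch S E u) ∈ S := by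
  have hr' : r.2 ∈ (S.filter (fun r => r.2 < u ∧ ∃ P ∈ E, P.1 = r.1)).image Prod.snd :=
    Finset.mem_image_of_mem _ (Finset.mem_filter.2 ⟨hr, hru, P, hP, hPr⟩)
  obtain ⟨s, hs⟩ := Finset.max_of_mem hr'
  have hlast : lastTouch S E u = s := by rw [lastTouch, hs]; rfl
  obtain ⟨q, hq, rfl⟩ := Finset.mem_image.1 (Finset.mem_of_max hs)
  obtain ⟨hqS, hqu, Q, hQ, hQq⟩ := Finset.mem_filter.1 hq
  rw [hlast]
  exact ⟨Finset.le_max_of_eq hr' hs, hqu, Q, hQ, by rw [hQq]; exact hqS⟩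

namespace DecompTree

variable {X S : Finset Pt} (T : DecompTree X)

/-- The pairs `(C, E)` of distinct children of `D` such that the topmost point of `C` touches a
key of `E`. -/
noncomputable def touchPairs (S D : Finset Pt) : Finset (Finset Pt × Finset Pt) :=
  (T.children D ×ˢ T.children D).filter
    (fun c => c.1 ≠ c.2 ∧ ∃ P ∈ c.2, (P.1, (TopPt c.1).2) ∈ S)

/-- The keys of the topmost points of the children of `D`. -/
noncomputable def childKeys (D : Finset Pt) : Finset ℤ :=
  (T.children D).image (fun C => (TopPt C).1)

/-- The keys of the topmost points of the children of `D` started before time `u`. -/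
noncomputable def activeKeys (D : Finset Pt) (u : ℤ) : Finset ℤ :=
  ((T.children D).filter (fun C => (TopPt C).2 < u)).image (fun C => (TopPt C).1)

/-- The keys of the topmost points of the active children of `D` touched at time `t`. -/
noncomputable def touchedKeys (S D : Finset Pt) (t : ℤ) : Finset ℤ :=
  ((T.children D).filter (fun C => (TopPt C).2 < t ∧ ∃ P ∈ C, (P.1, t) ∈ S)).image
    (fun C => (TopPt C).1)

/-- The last touch before `u` of the child of `D` whose topmost point has key `e`. -/
noncomputable def lastChildTouch (S D : Finset Pt) (u e : ℤ) : ℤ :=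
  lastTouch S (Function.invFunOn (fun C => (TopPt C).1) (T.children D : Set (Finset Pt)) e) u

variable {T}

lemma isBlock_child {C D : Finset Pt} (hC : C ∈ T.children D) : IsBlock X C :=
  T.isBlock_nodes C (mem_nodes_of_mem_children hC)

lemma eq_of_top_key (h : GreedyExecution X S) {C E D : Finset Pt} (hD : D ∈ T.nodes)
    (hC : C ∈ T.children D) (hE : E ∈ T.children D) (hk : (TopPt C).1 = (TopPt E).1) :
    C = E := by
  have hCn := mem_nodes_of_mem_children hC
  have hEn := mem_nodes_of_mem_children hE
  have := h.key_inj _ (node_subset hCn (top_mem hCn)) _ (node_subset hEn (top_mem hEn)) hk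
  exact children_eq_of_mem hD hC hE (top_mem hCn) (by rw [this]; exact top_mem hEn)

lemma eq_of_top_time (h : GreedyExecution X S) {C E D : Finset Pt} (hD : D ∈ T.nodes)
    (hC : C ∈ T.children D) (hE : E ∈ T.children D) (hk : (TopPt C).2 = (TopPt E).2) :
    C = E := by
  have hCn := mem_nodes_of_mem_children hC
  have hEn := mem_nodes_of_mem_children hE
  have := h.time_inj _ (node_subset hCn (top_mem hCn)) _ (node_subset hEn (top_mem hEn)) hk
  exact children_eq_of_mem hD hC hE (top_mem hCn) (by rw [this]; exact top_mem hEn)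

lemma notMem_of_ne {C E D : Finset Pt} (hD : D ∈ T.nodes) (hC : C ∈ T.children D)
    (hE : E ∈ T.children D) (hne : C ≠ E) {x : Pt} (hx : x ∈ C) : x ∉ E :=
  fun hxE => hne (children_eq_of_mem hD hC hE hx hxE)

lemma lastChildTouch_top (h : GreedyExecution X S) {E D : Finset Pt} (hD : D ∈ T.nodes)
    (hE : E ∈ T.children D) (u : ℤ) :
    T.lastChildTouch S D u (TopPt E).1 = lastTouch S E u := by
  have hinj : Set.InjOn (fun C => (TopPt C).1) (T.children D : Set (Finset Pt)) :=
    fun C hC E hE hk => eq_of_top_key h hD hC hE hk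
  rw [lastChildTouch, hinj.leftInvOn_invFunOn hE]

/-- While no new child of `D` starts, all accesses stay in the last started child. -/
lemma mem_child_of_time {C D : Finset Pt} (hD : D ∈ T.nodes)
    (hC : C ∈ T.children D) {u : ℤ} {d : Pt} (hd : d ∈ D) (hu : u ≤ d.2 + 1)
    (hmax : ∀ F ∈ T.children D, (TopPt F).2 < u → (TopPt F).2 ≤ (TopPt C).2) {a : Pt}
    (ha : a ∈ X) (hta : (TopPt C).2 ≤ a.2) (hau : a.2 < u) : a ∈ C := by
  have hCn := mem_nodes_of_mem_children hC
  have htop := top_mem hCn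
  have haD : a ∈ D := (T.isBlock_nodes D hD).mem_of_time ((ssubset_of_mem_children hC).1 htop) hd
    ha hta (by omega)
  obtain ⟨F, ⟨hF, haF⟩, -⟩ :=
    existsUnique_child hD (card_ne_one_of_mem_children hD hC) haD
  have hFn := mem_nodes_of_mem_children hF
  have h1 := hmax F hF (by have := top_le hFn haF; omega)
  have h2 : TopPt C ∈ F := (isBlock_child hF).mem_of_time (top_mem hFn) haF
    (node_subset hCn htop) h1 hta
  rw [children_eq_of_mem hD hC hF htop h2]
  exact haF

/-- The potential argument for one child of `D`. -/
lemma child_potential_bound (h : GreedyExecution X S) {C D : Finset Pt} (hD : D ∈ T.nodes)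
    (hC : C ∈ T.children D) {u : ℤ} {d : Pt} (hd : d ∈ D) (hu : u ≤ d.2 + 1)
    (htu : (TopPt C).2 < u)
    (hmax : ∀ F ∈ T.children D, (TopPt F).2 < u → (TopPt F).2 ≤ (TopPt C).2) :
    ∑ e ∈ T.activeKeys D u, nbhdRank (T.childKeys D) (T.activeKeys D u)
        (T.lastChildTouch S D u) e + (T.touchedKeys S D (TopPt C).2).card
      ≤ ∑ e ∈ T.activeKeys D (TopPt C).2, nbhdRank (T.childKeys D)
        (T.activeKeys D (TopPt C).2) (T.lastChildTouch S D (TopPt C).2) e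
        + (9 * Nat.log 2 ((T.childKeys D).card + 1) + 4) := by
  have hCn := mem_nodes_of_mem_children hC
  have htop := top_mem hCn
  have htopX := node_subset hCn htop
  have hCb := isBlock_child hC
  have hins : T.activeKeys D u = insert (TopPt C).1 (T.activeKeys D (TopPt C).2) := by
    ext e
    simp only [activeKeys, Finset.mem_insert, Finset.mem_image, Finset.mem_filter]
    constructor
    · rintro ⟨F, ⟨hF, hFu⟩, rfl⟩
      rcases (hmax F hF hFu).lt_or_eq with hlt | heq
      · exact Or.inr ⟨F, ⟨hF, hlt⟩, rfl⟩
      · rw [eq_of_top_time h hD hF hC heq]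
        exact Or.inl rfl
    · rintro (rfl | ⟨F, ⟨hF, hFt⟩, rfl⟩)
      · exact ⟨C, ⟨hC, htu⟩, rfl⟩
      · exact ⟨F, ⟨hF, by omega⟩, rfl⟩
  have hdisj : ∀ E ∈ T.children D, (TopPt E).2 < (TopPt C).2 → ∀ P ∈ E, P ∉ C := by
    intro E hE hlt P hP hPC
    rw [children_eq_of_mem hD hE hC hP hPC] at hlt
    omega
  have hkey : ∀ E ∈ T.children D, (TopPt E).2 < (TopPt C).2 → ∀ P ∈ E, ∀ c ∈ C, c.1 ≠ P.1 := by
    intro E hE hlt P hP c hc hcP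
    refine hdisj E hE hlt P hP ?_
    rw [← h.key_inj c (hCb.subset hc) P ((isBlock_child hE).subset hP) hcP]
    exact hc
  have hspec : ∀ E ∈ T.children D, ∀ v, (TopPt E).2 < v → lastTouch S E v < v ∧
      ∃ Q ∈ E, (Q.1, lastTouch S E v) ∈ S := by
    intro E hE v hv
    have hEn := mem_nodes_of_mem_children hE
    exact (lastTouch_spec (h.subset (node_subset hEn (top_mem hEn))) hv (top_mem hEn) rfl).2
  have hacc : ∀ {x s : ℤ}, (x, s) ∈ S → (TopPt C).2 ≤ s → s < u → ∃ b ∈ C, b.2 = s := by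
    intro x s hxs hts hsu
    obtain ⟨b, hb, hbs⟩ := h.exists_access _ hxs
    simp only at hbs
    exact ⟨b, mem_child_of_time hD hC hd hu hmax hb (by omega) (by omega), hbs⟩
  rw [hins]
  apply access_potential_bound (t := (TopPt C).2)
  · exact Finset.image_subset_image (Finset.filter_subset _ _)
  · refine Finset.image_subset_image fun E hE => ?_
    simp only [Finset.mem_filter] at hE ⊢
    exact ⟨hE.1, hE.2.1⟩
  · simp only [activeKeys, Finset.mem_image, Finset.mem_filter, not_exists, not_and]
    rintro F ⟨hF, hFt⟩ hk
    rw [eq_of_top_key h hD hF hC hk] at hFt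
    omega
  · simp only [activeKeys, touchedKeys, Finset.mem_image, Finset.mem_filter]
    rintro _ ⟨E, ⟨hE, hEt, P, hP, hPt⟩, rfl⟩ _ ⟨F, ⟨hF, hFt⟩, rfl⟩ hb
    rw [lastChildTouch_top h hD hE, lastChildTouch_top h hD hF]
    have hEn := mem_nodes_of_mem_children hE
    have hFn := mem_nodes_of_mem_children hF
    have hFE : F ≠ E := by
      rintro rfl
      simp only [KeyBtw] at hb
      omega
    obtain ⟨s, hs, hPs, hempty⟩ := (h.touch_iff _ htopX P.1 (hkey E hE hEt P hP _ htop).symm).1 hPt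
    have hsE := (lastTouch_spec hPs hs hP rfl).1
    obtain ⟨hFlt, Q, hQ, hQS⟩ := hspec F hF _ hFt
    by_contra hcon
    have hQX := node_subset hFn hQ
    have k1 : ¬ KeyIn (TopPt F).1 (TopPt C).1 Q.1 := fun hk =>
      hdisj F hF hFt _ ((isBlock_child hF).mem_of_key h (top_mem hFn) hQ htopX hk) htop
    have k2 : ¬ KeyIn (TopPt F).1 (TopPt E).1 Q.1 := fun hk =>
      notMem_of_ne hD hF hE hFE ((isBlock_child hF).mem_of_key h (top_mem hFn) hQ
        (node_subset hEn (top_mem hEn)) hk) (top_mem hEn)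
    have k3 : ¬ KeyIn (TopPt E).1 Q.1 P.1 := fun hk =>
      notMem_of_ne hD hF hE hFE hQ ((isBlock_child hE).mem_of_key h (top_mem hEn) hP hQX hk)
    have hQP := (hempty _ _ hQS (by simp only at hsE; omega) hFlt
      (by simp only [KeyIn, KeyBtw] at *; omega)).1
    have := h.key_inj Q hQX P (node_subset hEn hP) hQP
    exact notMem_of_ne hD hF hE hFE hQ (this ▸ hP)
  · simp only [activeKeys, Finset.mem_image, Finset.mem_filter]
    rintro _ ⟨E, ⟨hE, hEt⟩, rfl⟩
    rw [lastChildTouch_top h hD hE]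
    exact (hspec E hE _ hEt).1
  · simp only [activeKeys, touchedKeys, Finset.mem_image, Finset.mem_filter]
    rintro _ ⟨E, ⟨hE, hEt⟩, rfl⟩ hnot
    rw [lastChildTouch_top h hD hE, lastChildTouch_top h hD hE]
    obtain ⟨hlt, Q, hQ, hQS⟩ := hspec E hE u (by omega)
    obtain ⟨hlt', Q', hQ', hQS'⟩ := hspec E hE _ hEt
    have h1 := (lastTouch_spec (u := u) hQS' (by simp only; omega) hQ' rfl).1
    have h2 : lastTouch S E u < (TopPt C).2 := by
      by_contra hcon
      obtain ⟨b, hb, hbs⟩ := hacc hQS (by omega) hlt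
      rw [← hbs] at hQS
      exact hnot ⟨E, ⟨hE, hEt, Q, hQ, h.touch_top hCb (hkey E hE hEt Q hQ) hb hQS⟩, rfl⟩
    have h3 := (lastTouch_spec hQS h2 hQ rfl).1
    exact le_antisymm h3 h1
  · simp only [touchedKeys, Finset.mem_image, Finset.mem_filter]
    rintro _ ⟨E, ⟨hE, hEt, P, hP, hPt⟩, rfl⟩
    rw [lastChildTouch_top h hD hE]
    exact (lastTouch_spec hPt htu hP rfl).1
  · simp only [activeKeys, touchedKeys, Finset.mem_image, Finset.mem_filter]
    rintro _ ⟨E, ⟨hE, hEt, P, hP, hPt⟩, rfl⟩ _ ⟨F, ⟨hF, hFt⟩, rfl⟩ hb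
    rw [lastChildTouch_top h hD hE]
    have hEn := mem_nodes_of_mem_children hE
    have hFn := mem_nodes_of_mem_children hF
    have hFE : F ≠ E := by
      rintro rfl
      simp only [KeyBtw] at hb
      omega
    have h1 := (lastTouch_spec hPt htu hP rfl).1
    obtain ⟨hlt, Q, hQ, hQS⟩ := hspec E hE u (by omega)
    refine le_antisymm ?_ h1
    by_contra hcon
    obtain ⟨c, hc, hcs⟩ := hacc hQS (by omega) hlt
    rw [← hcs] at hQS hcon
    refine h.not_keyBtw hCb (hkey E hE hEt Q hQ) hc ?_ hQS (node_subset hFn (top_mem hFn)) hFt ?_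
    · rintro rfl
      omega
    · refine h.keyBtw_of_mem_block hCb htop hc (node_subset hFn (top_mem hFn))
        (hdisj F hF hFt _ (top_mem hFn)) ?_
      have k3 : ¬ KeyIn (TopPt E).1 (TopPt F).1 Q.1 := fun hk =>
        notMem_of_ne hD hF hE hFE (top_mem hFn) ((isBlock_child hE).mem_of_key h (top_mem hEn) hQ
          (node_subset hFn (top_mem hFn)) hk)
      simp only [KeyIn, KeyBtw] at *
      omega

lemma card_touchPairs_le (h : GreedyExecution X S) {D : Finset Pt} (hD : D ∈ T.nodes) :
    (T.touchPairs S D).card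
      ≤ (T.children D).card * (9 * Nat.log 2 ((T.children D).card + 1) + 4) := by
  obtain ⟨d, hd, hdmax⟩ := Finset.exists_max_image D Prod.snd (T.isBlock_nodes D hD).1
  set Θ := (T.children D).image (fun C => (TopPt C).2) with hΘ
  have hΘlt : ∀ t ∈ Θ, t < d.2 + 1 := by
    simp only [hΘ, Finset.mem_image]
    rintro _ ⟨C, hC, rfl⟩
    have := hdmax _ ((ssubset_of_mem_children hC).1 (top_mem (mem_nodes_of_mem_children hC)))
    omega
  have hsum := sum_cost_le Θ
    (fun u => ∑ e ∈ T.activeKeys D u, nbhdRank (T.childKeys D) (T.activeKeys D u)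
      (T.lastChildTouch S D u) e)
    (fun t => (T.touchedKeys S D t).card) (9 * Nat.log 2 ((T.childKeys D).card + 1) + 4)
    (d.2 + 1) (by
      simp only [hΘ, Finset.mem_image, forall_exists_index, and_imp, forall_apply_eq_imp_iff₂]
      intro C hC u htu hue hmax
      exact child_potential_bound h hD hC hd hue htu hmax)
    (by
      intro u hu
      have : T.activeKeys D u = ∅ := by
        rw [activeKeys, Finset.image_eq_empty, Finset.filter_eq_empty_iff]
        intro C hC
        have := hu _ (Finset.mem_image_of_mem _ hC)
        omega
      simp [this])
    _ (d.2 + 1) le_rfl rfl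
  rw [Finset.filter_true_of_mem hΘlt] at hsum
  have hcount : (T.touchPairs S D).card ≤ ∑ t ∈ Θ, (T.touchedKeys S D t).card := by
    rw [Finset.card_eq_sum_card_fiberwise (f := fun c => (TopPt c.1).2) (t := Θ)]
    · refine Finset.sum_le_sum fun t _ => Finset.card_le_card_of_injOn (fun c => (TopPt c.2).1) ?_ ?_
      · intro c hc
        simp only [touchPairs, Finset.coe_filter, Finset.mem_filter, Finset.mem_product,
          Set.mem_ofPred_eq] at hc
        obtain ⟨⟨⟨hC, hE⟩, hne, P, hP, hPS⟩, rfl⟩ := hc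
        refine Finset.mem_coe.2 (Finset.mem_image.2 ⟨c.2, Finset.mem_filter.2 ⟨hE, ?_, P, hP, hPS⟩,
          rfl⟩)
        have hEn := mem_nodes_of_mem_children hE
        obtain ⟨Q, hQ, hQP, hQt⟩ := h.exists_access_key hPS
        rw [h.key_inj Q hQ P (node_subset hEn hP) hQP] at hQt
        refine lt_of_le_of_ne ((top_le hEn hP).trans hQt) fun he => hne ?_
        exact eq_of_top_time h hD hC hE he.symm
      · intro c hc c' hc' hcc
        simp only [touchPairs, Finset.coe_filter, Finset.mem_filter, Finset.mem_product,
          Set.mem_ofPred_eq] at hc hc'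
        obtain ⟨⟨⟨hC, hE⟩, -⟩, ht⟩ := hc
        obtain ⟨⟨⟨hC', hE'⟩, -⟩, ht'⟩ := hc'
        exact Prod.ext (eq_of_top_time h hD hC hC' (ht.trans ht'.symm))
          (eq_of_top_key h hD hE hE' hcc)
    · intro c hc
      simp only [touchPairs, Finset.coe_filter, Finset.mem_product, Set.mem_ofPred_eq] at hc
      exact Finset.mem_coe.2 (Finset.mem_image_of_mem (fun C => (TopPt C).2) hc.1.1)
  have hK : (T.childKeys D).card ≤ (T.children D).card := Finset.card_image_le
  have hlog := Nat.log_mono_right (b := 2) (Nat.succ_le_succ hK)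
  calc (T.touchPairs S D).card ≤ ∑ t ∈ Θ, (T.touchedKeys S D t).card := hcount
    _ ≤ Θ.card * (9 * Nat.log 2 ((T.childKeys D).card + 1) + 4) := by omega
    _ ≤ _ := Nat.mul_le_mul Finset.card_image_le (by simp only [Nat.succ_eq_add_one] at hlog; omega)

lemma card_touchPairs_add_le (D : Finset Pt) :
    (T.touchPairs S D).card + (T.children D).card ≤ (T.children D).card * (T.children D).card := by
  have hsub : T.touchPairs S D ⊆ (T.children D).offDiag := by
    intro c hc
    simp only [touchPairs, Finset.mem_filter, Finset.mem_product] at hc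
    exact Finset.mem_offDiag.2 ⟨hc.1.1, hc.1.2, hc.2.1⟩
  have := Finset.card_le_card hsub
  rw [Finset.offDiag_card] at this
  have := Nat.le_mul_self (T.children D).card
  omega

end DecompTree

namespace DecompTree

variable {X S : Finset Pt} {T : DecompTree X}

/-- The charging scheme: `c = (a, b)` is charged to a pair of siblings `(C, E)`, or to a node and
a side. -/
def IsCharge (T : DecompTree X) (S : Finset Pt) (c : Pt × Pt) :
    (Finset Pt × Finset Pt) ⊕ (Finset Pt × Bool) → Prop
  | Sum.inl CE => c.2 ∈ CE.1 ∧ c.1 ∉ CE.1 ∧ ∃ P ∈ CE.2, IsZig X S c.1 c.2 P.1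
  | Sum.inr Aε => c.1 ∈ Aε.1 ∧ c.2 ∉ Aε.1 ∧ c.2 ∈ T.parent Aε.1 ∧
      ∃ p, IsZig X S c.1 c.2 p ∧ (∀ q ∈ T.parent Aε.1, q.1 ≠ p) ∧ (Aε.2 = true ↔ c.1.1 < p)

lemma exists_charge (h : GreedyExecution X S) {c : Pt × Pt} {p : ℤ}
    (hz : IsZig X S c.1 c.2 p) :
    ∃ τ ∈ (T.nodes.biUnion (T.touchPairs S)).disjSum (T.lateNodes ×ˢ (Finset.univ : Finset Bool)),
      IsCharge T S c τ := by
  obtain ⟨a, b⟩ := c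
  simp only at hz
  obtain ⟨P, hP, rfl, -⟩ := hz.exists_access_key h
  have hbP : b ≠ P := by
    rintro rfl
    have := hz.btw
    simp only [KeyBtw] at this
    omega
  obtain ⟨D, hD, -, C, hC, E, hE, hbC, hPE, hPC, hbE⟩ :=
    exists_separating T.root_mem hz.mem_right hP hbP
  have hpC : ∀ q ∈ C, q.1 ≠ P.1 := by
    intro q hq hqP
    rw [h.key_inj q ((isBlock_child hC).subset hq) P hP hqP] at hq
    exact hPC hq
  by_cases haC : a ∈ C
  · have hba : b ≠ a := by
      rintro rfl
      exact lt_irrefl _ hz.lt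
    obtain ⟨D', hD', hD'C, B, hB, A, hA, hbB, haA, -, hbA⟩ :=
      exists_separating (mem_nodes_of_mem_children hC) hbC haC hba
    obtain ⟨hAn, hAX, hAp⟩ := T.mem_children.1 hA
    have hbD' := (ssubset_of_mem_children hB).1 hbB
    refine ⟨Sum.inr (A, decide (a.1 < P.1)), ?_, haA, hbA, ?_, P.1, hz, ?_, by simp⟩
    · refine Finset.inr_mem_disjSum.2 (Finset.mem_product.2
        ⟨Finset.mem_filter.2 ⟨hAn, hAX, fun ht => hbA ?_⟩, Finset.mem_univ _⟩)
      rw [hAp] at ht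
      exact (isBlock_child hA).mem_of_time ht haA hz.mem_right (top_le hD' hbD') hz.lt.le
    · rw [hAp]
      exact hbD'
    · simp only [hAp]
      exact fun q hq => hpC q (hD'C hq)
  · refine ⟨Sum.inl (C, E), ?_, hbC, haC, P, hPE, hz⟩
    refine Finset.inl_mem_disjSum.2 (Finset.mem_biUnion.2 ⟨D, hD, Finset.mem_filter.2
      ⟨Finset.mem_product.2 ⟨hC, hE⟩, ?_, P, hPE, ?_⟩⟩)
    · exact fun he : C = E => hPC (he ▸ hPE)
    · exact h.touch_top (isBlock_child hC) hpC hbC hz.touch_right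

lemma IsCharge.unique (h : GreedyExecution X S)
    {τ : (Finset Pt × Finset Pt) ⊕ (Finset Pt × Bool)}
    (hτ : τ ∈ (T.nodes.biUnion (T.touchPairs S)).disjSum
      (T.lateNodes ×ˢ (Finset.univ : Finset Bool)))
    {c c' : Pt × Pt} (hc : IsCharge T S c τ) (hc' : IsCharge T S c' τ) : c = c' := by
  rcases τ with ⟨C, E⟩ | ⟨A, ε⟩
  · obtain ⟨D, hD, hCE⟩ := Finset.mem_biUnion.1 (Finset.inl_mem_disjSum.1 hτ)
    obtain ⟨hmem, hne, -⟩ := Finset.mem_filter.1 hCE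
    obtain ⟨hC, hE⟩ := Finset.mem_product.1 hmem
    obtain ⟨hb, ha, P, hP, hz⟩ := hc
    obtain ⟨hb', ha', P', hP', hz'⟩ := hc'
    obtain ⟨h1, h2⟩ := IsZig.eq_of_sibling h (isBlock_child hC) (isBlock_child hE)
      (fun x hx => notMem_of_ne hD hC hE hne hx) hz hz' hb hb' ha ha' hP hP'
    exact Prod.ext h1 h2
  · have hA := (Finset.mem_product.1 (Finset.inr_mem_disjSum.1 hτ)).1
    obtain ⟨hAn, hAX, -⟩ := Finset.mem_filter.1 hA
    have hsub := (T.ssubset_parent A hAn hAX).1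
    have hPb := T.isBlock_nodes _ (T.parent_mem A hAn hAX)
    have hAb := T.isBlock_nodes A hAn
    obtain ⟨a, b⟩ := c
    obtain ⟨a', b'⟩ := c'
    obtain ⟨ha, hbA, hb, p, hz, hp, hε⟩ := hc
    obtain ⟨ha', hbA', hb', p', hz', hp', hε'⟩ := hc'
    simp only at *
    have e1 := hz.left_eq_top h hAb ha hbA fun q hq => hp q (hsub hq)
    have e2 := hz'.left_eq_top h hAb ha' hbA' fun q hq => hp' q (hsub hq)
    obtain rfl := e1.trans e2.symm
    have n1 := hz.not_lt_of_left_eq h hPb hz' hb hb' hp hp' (hε.symm.trans hε')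
    have n2 := hz'.not_lt_of_left_eq h hPb hz hb' hb hp' hp (hε'.symm.trans hε)
    rw [h.time_inj b hz.mem_right b' hz'.mem_right (by omega)]

lemma card_mmc_le {n : ℕ} (hX : IsPermPointSet n X) :
    (((greedyG n X).filter (fun p => inMMC X (greedyG n X) p)).image (CP X (greedyG n X))).card
      ≤ ∑ D ∈ T.nodes, (T.touchPairs (X ∪ greedyG n X) D).card + 2 * T.lateNodes.card := by
  have h := greedyExecution hX
  have hcard := Finset.card_le_card_of_forall_subsingleton
    (s := ((greedyG n X).filter (fun p => inMMC X (greedyG n X) p)).image (CP X (greedyG n X)))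
    (t := (T.nodes.biUnion (T.touchPairs (X ∪ greedyG n X))).disjSum
      (T.lateNodes ×ˢ (Finset.univ : Finset Bool)))
    (IsCharge T (X ∪ greedyG n X))
    (by
      intro c hc
      obtain ⟨r, hr, rfl⟩ := Finset.mem_image.1 hc
      obtain ⟨hrG, hm⟩ := Finset.mem_filter.1 hr
      exact exists_charge h (isZig_of_inMMC hX hrG hm))
    (fun τ hτ c hc c' hc' => IsCharge.unique h hτ hc.2 hc'.2)
  rw [Finset.card_disjSum, Finset.card_product, Finset.card_univ, Fintype.card_bool] at hcard
  have := Finset.card_biUnion_le (s := T.nodes) (t := T.touchPairs (X ∪ greedyG n X))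
  omega

end DecompTree

lemma charge_le {q l : ℕ} (h1 : q + (l + 1) ≤ (l + 1) * (l + 1))
    (h2 : q ≤ (l + 1) * (9 * Nat.log 2 (l + 1 + 1) + 4)) :
    q + 2 * l ≤ 14 * l * Nat.log 2 (l + 1) := by
  rcases Nat.eq_zero_or_pos l with rfl | hl
  · omega
  set c := Nat.log 2 (l + 1) with hc
  have hc1 : 1 ≤ c := (Nat.le_log_iff_pow_le (by norm_num) (by omega)).2 (by omega)
  rcases lt_or_ge l 12 with hs | hs
  · nlinarith
  have hc3 : 3 ≤ c := (Nat.le_log_iff_pow_le (by norm_num) (by omega)).2 (by omega)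
  rcases lt_or_ge l 31 with hm | hm
  · nlinarith
  have hc5 : 5 ≤ c := (Nat.le_log_iff_pow_le (by norm_num) (by omega)).2 (by omega)
  have hL : Nat.log 2 (l + 1 + 1) ≤ c + 1 := by
    rw [hc, ← Nat.log_mul_base (by norm_num) (by omega)]
    exact Nat.log_mono_right (by omega)
  have h3 : q ≤ (l + 1) * (9 * (c + 1) + 4) := h2.trans (Nat.mul_le_mul_left _ (by omega))
  nlinarith [Nat.mul_le_mul_left l hc5, Nat.mul_le_mul_right c hm]

/-- For every integer `k ≥ 2` and every `k`-decomposable permutation point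
set `X` of size `n`, `|MMC| ≤ 14 · n · log₂ k`. -/
theorem mmc_bound (n k : ℕ) (X : Finset Pt) (hk : 2 ≤ k)
    (hX : IsPermPointSet n X) (hdec : kDecomposable k X) :
    ((((greedyG n X).filter (fun p => inMMC X (greedyG n X) p)).image
        (CP X (greedyG n X))).card : ℝ) ≤ 14 * n * Real.logb 2 k := by
  obtain ⟨T, hT⟩ := hdec
  have h := greedyExecution hX
  have hn : X.card ≤ n := by
    obtain ⟨σ, rfl⟩ := hX
    exact Finset.card_image_le.trans (by simp)
  have hfib : T.lateNodes.card
      = ∑ D ∈ T.nodes, (T.lateNodes.filter (fun A => T.parent A = D)).card :=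
    Finset.card_eq_sum_card_fiberwise fun A hA => by
      obtain ⟨hAn, hAX, -⟩ := Finset.mem_filter.1 (Finset.mem_coe.1 hA)
      exact T.parent_mem A hAn hAX
  have hnode : ∀ D ∈ T.nodes, (T.touchPairs (X ∪ greedyG n X) D).card
      + 2 * (T.lateNodes.filter (fun A => T.parent A = D)).card
      ≤ 14 * (T.lateNodes.filter (fun A => T.parent A = D)).card * Nat.log 2 k := by
    intro D hD
    by_cases h1 : D.card = 1
    · have hch : T.children D = ∅ := by
        rw [Finset.eq_empty_iff_forall_notMem]
        exact fun C hC => DecompTree.card_ne_one_of_mem_children hD hC h1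
      have hlate : T.lateNodes.filter (fun A => T.parent A = D) = ∅ := by
        rw [Finset.filter_eq_empty_iff]
        intro A hA hAD
        obtain ⟨hAn, hAX, -⟩ := Finset.mem_filter.1 hA
        have : A ∈ T.children D := T.mem_children.2 ⟨hAn, hAX, hAD⟩
        simp [hch] at this
      simp [DecompTree.touchPairs, hch, hlate]
    · have hl := DecompTree.card_late_children hD h1
      have q1 := DecompTree.card_touchPairs_add_le (T := T) (S := X ∪ greedyG n X) D
      have q2 := DecompTree.card_touchPairs_le h hD
      have hDk := hT D hD
      rw [← hl] at q1 q2 hDk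
      exact (charge_le q1 q2).trans (Nat.mul_le_mul_left _ (Nat.log_mono_right hDk))
  have hsum := Finset.sum_le_sum hnode
  rw [Finset.sum_add_distrib, ← Finset.mul_sum, ← Finset.sum_mul, ← Finset.mul_sum, ← hfib]
    at hsum
  have hlate := (DecompTree.card_lateNodes_le (T := T) h).trans hn
  have hmain : (((greedyG n X).filter (fun p => inMMC X (greedyG n X) p)).image
      (CP X (greedyG n X))).card ≤ 14 * n * Nat.log 2 k :=
    ((DecompTree.card_mmc_le hX).trans hsum).trans
      (Nat.mul_le_mul_right _ (Nat.mul_le_mul_left _ hlate))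
  calc _ ≤ ((14 * n * Nat.log 2 k : ℕ) : ℝ) := by exact_mod_cast hmain
    _ = 14 * n * (Nat.log 2 k : ℝ) := by push_cast; ring
    _ ≤ _ := mul_le_mul_of_nonneg_left (by exact_mod_cast Real.natLog_le_logb k 2) (by positivity)
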